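/- Let d ≥ 1, 1 < p ≤ 2, and k = 2d(1/p − 1/2). There exists a constant C > 0 such that for every 0 < ℏ ≤ 1 and every Schwartz function f on ℝ^d: ‖f‖_{L^p(ℝ^d)} ≤ C·ℏ^{d(1/p−1/2)/2}·‖V_g(D_{ℏ^{−1/2}} f)‖_{L^p(ℝ^{2d})} and ‖V_g(D_{ℏ^{−1/2}} f)‖_{L^p(ℝ^{2d})} ≤ C·ℏ^{d(1/2−1/p)/2}·‖(1−ℏΔ)^{k/2} f‖_{L^p(ℝ^d)}. -/

import Mathlib

open MeasureTheory Complex Real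
open scoped ENNReal RealInnerProductSpace

noncomputable section

abbrev E (d : ℕ) : Type := EuclideanSpace ℝ (Fin d)

/-- Phase space `ℝ^{2d} = ℝ^d × ℝ^d`. -/
abbrev P (d : ℕ) : Type := E d × E d

/-- The complex conjugate of the wave packet `π(z)g`, Gaussian window `g(y)=exp(-|y|²/2)`. -/
def pkbar (d : ℕ) (z : P d) (y : E d) : ℂ :=
  Complex.exp (-Complex.I * (⟪y, z.2⟫ : ℂ)) * Real.exp (-‖y - z.1‖ ^ 2 / 2)

/-- The short-time Fourier transform with Gaussian window. -/
def stft (d : ℕ) (u : E d → ℂ) (z : P d) : ℂ := ∫ y, u y * pkbar d z y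

/-- The Fourier transform `ℱu(ξ) = ∫ exp(-i x·ξ) u(x) dx`. -/
def FT (d : ℕ) (u : E d → ℂ) (ξ : E d) : ℂ :=
  ∫ x, Complex.exp (-Complex.I * (⟪x, ξ⟫ : ℂ)) * u x

/-- The semiclassical Bessel potential `(1-ℏΔ)^{k/2} u = ℱ⁻¹((1+ℏ|ξ|²)^{k/2} ℱu)`. -/
def besselh (d : ℕ) (h k : ℝ) (u : E d → ℂ) (x : E d) : ℂ :=
  (((2 * π) ^ d : ℝ) : ℂ)⁻¹ *
    ∫ ξ, Complex.exp (Complex.I * (⟪x, ξ⟫ : ℂ)) *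
      (((1 + h * ‖ξ‖ ^ 2) ^ (k / 2) : ℝ) : ℂ) * FT d u ξ

/-- The dilation `D_{ℏ^{-1/2}} u (x) = ℏ^{d/4}·u(ℏ^{1/2} x)`. -/
def dil (d : ℕ) (h : ℝ) (u : E d → ℂ) (x : E d) : ℂ :=
  (h ^ ((d : ℝ) / 4) : ℝ) * u ((h ^ ((1 : ℝ) / 2) : ℝ) • x)

lemma lintegral_Ioi_ite_lt_rpow {p a : ℝ} (hp : 1 < p) (ha : 0 ≤ a) :
    ∫⁻ t in Set.Ioi (0 : ℝ), (if t < a then ENNReal.ofReal (t ^ (p - 2)) else 0) =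
      ENNReal.ofReal (a ^ (p - 1) / (p - 1)) := by
  have h1 : ∀ t : ℝ, (if t < a then ENNReal.ofReal (t ^ (p - 2)) else 0) =
      (Set.Iio a).indicator (fun t => ENNReal.ofReal (t ^ (p - 2))) t := fun t => by
    simp [Set.indicator_apply]
  simp_rw [h1]
  rw [setLIntegral_indicator measurableSet_Iio, Set.inter_comm, Set.Ioi_inter_Iio,
    restrict_Ioo_eq_restrict_Ioc, ← ofReal_integral_eq_lintegral_ofReal]
  · rw [← intervalIntegral.integral_of_le ha, integral_rpow (Or.inl (by linarith))]
    rw [Real.zero_rpow (by linarith)]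
    congr 2 <;> ring_nf
  · exact (intervalIntegrable_iff_integrableOn_Ioc_of_le ha).1
      (intervalIntegral.intervalIntegrable_rpow' (by linarith))
  · filter_upwards [ae_restrict_mem measurableSet_Ioc] with t ht
    exact Real.rpow_nonneg ht.1.le _

lemma lintegral_Ioi_ite_le_rpow {p a : ℝ} (hp : p < 2) (ha : 0 < a) :
    ∫⁻ t in Set.Ioi (0 : ℝ), (if a ≤ t then ENNReal.ofReal (t ^ (p - 3)) else 0) =
      ENNReal.ofReal (a ^ (p - 2) / (2 - p)) := by
  have h1 : ∀ t : ℝ, (if a ≤ t then ENNReal.ofReal (t ^ (p - 3)) else 0) =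
      (Set.Ici a).indicator (fun t => ENNReal.ofReal (t ^ (p - 3))) t := fun t => by
    simp [Set.indicator_apply]
  simp_rw [h1]
  have h2 : Set.Ici a ∩ Set.Ioi 0 = Set.Ici a :=
    Set.inter_eq_left.2 fun x hx => lt_of_lt_of_le ha hx
  rw [setLIntegral_indicator measurableSet_Ici, h2, ← restrict_Ioi_eq_restrict_Ici,
    ← ofReal_integral_eq_lintegral_ofReal]
  · rw [integral_Ioi_rpow_of_lt (by linarith) ha]
    congr 1
    rw [show p - 3 + 1 = p - 2 by ring, neg_div, ← div_neg, neg_sub]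
  · exact integrableOn_Ioi_rpow_of_lt (by linarith) ha
  · filter_upwards [ae_restrict_mem measurableSet_Ioi] with t ht
    exact Real.rpow_nonneg (ha.trans ht).le _

/-- Marcinkiewicz interpolation between weak type `(1, 1)` and strong type `(2, 2)`. -/
theorem lintegral_rpow_le_of_weak_one_strong_two {Y Z : Type*} [MeasurableSpace Y]
    [MeasurableSpace Z] {μ : Measure Y} [SFinite μ] {ν : Measure Z} {p : ℝ} (hp1 : 1 < p)
    (hp2 : p < 2) (T : (Y → ℂ) → Z → ℂ) (C₁ C₂ : ℝ≥0∞)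
    (hTm : ∀ F, Integrable F μ → Measurable F → AEStronglyMeasurable (T F) ν)
    (hadd : ∀ F G, Integrable F μ → Integrable G μ → ∀ z, T (F + G) z = T F z + T G z)
    (h1 : ∀ F, Integrable F μ → Measurable F → ∀ t : ℝ, 0 < t →
      ν {z | t < ‖T F z‖} ≤ C₁ * (∫⁻ y, ‖F y‖ₑ ∂μ) * ENNReal.ofReal (1 / t))
    (h2 : ∀ F, Integrable F μ → Measurable F →
      ∫⁻ z, ‖T F z‖ₑ ^ (2 : ℝ) ∂ν ≤ C₂ * ∫⁻ y, ‖F y‖ₑ ^ (2 : ℝ) ∂μ)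
    {F : Y → ℂ} (hF : Integrable F μ) (hFm : Measurable F) :
    ∫⁻ z, ‖T F z‖ₑ ^ p ∂ν ≤ ENNReal.ofReal p *
      (C₁ * ENNReal.ofReal (2 / (p - 1)) + C₂ * ENNReal.ofReal (4 / (2 - p))) *
        ∫⁻ y, ‖F y‖ₑ ^ p ∂μ := by
  have hp0 : 0 < p := by linarith
  set hi : ℝ → Y → ℂ := fun t => {y | t < ‖F y‖}.indicator F with hhi
  set lo : ℝ → Y → ℂ := fun t => {y | ‖F y‖ ≤ t}.indicator F with hlo
  have hmhi : ∀ t, MeasurableSet {y | t < ‖F y‖} := fun t =>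
    measurableSet_lt measurable_const hFm.norm
  have hmlo : ∀ t, MeasurableSet {y | ‖F y‖ ≤ t} := fun t =>
    measurableSet_le hFm.norm measurable_const
  have hhiI : ∀ t, Integrable (hi t) μ := fun t => hF.indicator (hmhi t)
  have hloI : ∀ t, Integrable (lo t) μ := fun t => hF.indicator (hmlo t)
  have hsum : ∀ t, F = hi t + lo t := by
    intro t
    funext y
    by_cases hy : t < ‖F y‖
    · simp [hhi, hlo, hy]
    · simp [hhi, hlo, hy, not_lt.1 hy]
  have hdist : ∀ t : ℝ, 0 < t → ν {z | t < ‖T F z‖} ≤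
      C₁ * (∫⁻ y, ‖hi t y‖ₑ ∂μ) * ENNReal.ofReal (2 / t) +
        C₂ * (∫⁻ y, ‖lo t y‖ₑ ^ (2 : ℝ) ∂μ) * ENNReal.ofReal (4 / t ^ 2) := by
    intro t ht
    have hsub : {z | t < ‖T F z‖} ⊆ {z | t / 2 < ‖T (hi t) z‖} ∪
        {z | ENNReal.ofReal (t ^ 2 / 4) ≤ ‖T (lo t) z‖ₑ ^ (2 : ℝ)} := by
      intro z hz
      by_contra hcon
      simp only [Set.mem_union, Set.mem_ofPred_eq, not_or, not_lt, not_le] at hcon hz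
      have e1 : ‖T (lo t) z‖ ≤ t / 2 := by
        by_contra h
        push Not at h
        refine absurd hcon.2 (not_lt.2 ?_)
        rw [← ofReal_norm, ENNReal.ofReal_rpow_of_nonneg (norm_nonneg _) (by norm_num)]
        apply ENNReal.ofReal_le_ofReal
        rw [Real.rpow_two]
        nlinarith
      rw [hsum t, hadd _ _ (hhiI t) (hloI t)] at hz
      linarith [norm_add_le (T (hi t) z) (T (lo t) z), hcon.1]
    refine (measure_mono hsub).trans ((measure_union_le _ _).trans (add_le_add ?_ ?_))
    · have := h1 (hi t) (hhiI t) (hFm.indicator (hmhi t)) (t / 2) (by positivity)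
      rwa [one_div_div] at this
    · refine (meas_ge_le_lintegral_div ((hTm _ (hloI t) (hFm.indicator (hmlo t))).enorm.pow_const _)
        ?_ ?_).trans ?_
      · simpa using by positivity
      · exact ENNReal.ofReal_ne_top
      · rw [ENNReal.div_eq_inv_mul, mul_comm, ← ENNReal.ofReal_inv_of_pos (by positivity), inv_div]
        gcongr
        exact h2 _ (hloI t) (hFm.indicator (hmlo t))
  have hlayer := lintegral_rpow_eq_lintegral_meas_lt_mul ν (f := fun z => ‖T F z‖)
    (.of_forall fun z => norm_nonneg _) (hTm F hF hFm).norm.aemeasurable hp0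
  have hconv : ∀ z, ‖T F z‖ₑ ^ p = ENNReal.ofReal (‖T F z‖ ^ p) := fun z => by
    rw [← ofReal_norm, ENNReal.ofReal_rpow_of_nonneg (norm_nonneg _) hp0.le]
  simp_rw [hconv]
  rw [hlayer, mul_assoc (ENNReal.ofReal p)]
  gcongr
  have hbound : ∀ t ∈ Set.Ioi (0 : ℝ), ν {z | t < ‖T F z‖} * ENNReal.ofReal (t ^ (p - 1)) ≤
      C₁ * ENNReal.ofReal 2 *
        (∫⁻ y, ‖F y‖ₑ * (if t < ‖F y‖ then ENNReal.ofReal (t ^ (p - 2)) else 0) ∂μ)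
      + C₂ * ENNReal.ofReal 4 *
        (∫⁻ y, ‖F y‖ₑ ^ (2 : ℝ) * (if ‖F y‖ ≤ t then ENNReal.ofReal (t ^ (p - 3)) else 0) ∂μ) := by
    intro t ht
    have ht : 0 < t := ht
    have e1 : ENNReal.ofReal (2 / t) * ENNReal.ofReal (t ^ (p - 1)) =
        ENNReal.ofReal 2 * ENNReal.ofReal (t ^ (p - 2)) := by
      rw [← ENNReal.ofReal_mul (by positivity), ← ENNReal.ofReal_mul (by positivity)]
      congr 1
      rw [show p - 1 = (p - 2) + 1 by ring, Real.rpow_add_one ht.ne']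
      field_simp
    have e2 : ENNReal.ofReal (4 / t ^ 2) * ENNReal.ofReal (t ^ (p - 1)) =
        ENNReal.ofReal 4 * ENNReal.ofReal (t ^ (p - 3)) := by
      rw [← ENNReal.ofReal_mul (by positivity), ← ENNReal.ofReal_mul (by positivity)]
      congr 1
      rw [show p - 1 = (p - 3) + (2 : ℕ) by push_cast; ring, Real.rpow_add_natCast ht.ne']
      field_simp
    have e3 : (∫⁻ y, ‖F y‖ₑ * (if t < ‖F y‖ then ENNReal.ofReal (t ^ (p - 2)) else 0) ∂μ) =
        (∫⁻ y, ‖hi t y‖ₑ ∂μ) * ENNReal.ofReal (t ^ (p - 2)) := by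
      rw [← lintegral_mul_const' _ _ ENNReal.ofReal_ne_top]
      congr 1 with y
      by_cases hy : t < ‖F y‖ <;> simp [hhi, hy]
    have e4 : (∫⁻ y, ‖F y‖ₑ ^ (2 : ℝ) *
        (if ‖F y‖ ≤ t then ENNReal.ofReal (t ^ (p - 3)) else 0) ∂μ) =
        (∫⁻ y, ‖lo t y‖ₑ ^ (2 : ℝ) ∂μ) * ENNReal.ofReal (t ^ (p - 3)) := by
      rw [← lintegral_mul_const' _ _ ENNReal.ofReal_ne_top]
      congr 1 with y
      by_cases hy : ‖F y‖ ≤ t <;> simp [hlo, hy]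
    calc _ ≤ _ := mul_le_mul_left (hdist t ht) _
      _ = _ := by
        rw [add_mul, mul_assoc, e1, mul_assoc (C₂ * _), e2, e3, e4]
        ring
  refine (setLIntegral_mono' measurableSet_Ioi hbound).trans ?_
  have hm1 : Measurable (fun q : ℝ × Y => ‖F q.2‖ₑ *
      (if q.1 < ‖F q.2‖ then ENNReal.ofReal (q.1 ^ (p - 2)) else 0)) := by
    refine (hFm.comp measurable_snd).enorm.mul (Measurable.ite ?_ ?_ measurable_const)
    · exact measurableSet_lt measurable_fst (hFm.comp measurable_snd).norm
    · fun_prop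
  have hm2 : Measurable (fun q : ℝ × Y => ‖F q.2‖ₑ ^ (2 : ℝ) *
      (if ‖F q.2‖ ≤ q.1 then ENNReal.ofReal (q.1 ^ (p - 3)) else 0)) := by
    refine ((hFm.comp measurable_snd).enorm.pow_const _).mul (Measurable.ite ?_ ?_ measurable_const)
    · exact measurableSet_le (hFm.comp measurable_snd).norm measurable_fst
    · fun_prop
  have hm1' : Measurable fun t : ℝ => ∫⁻ y, ‖F y‖ₑ *
      (if t < ‖F y‖ then ENNReal.ofReal (t ^ (p - 2)) else 0) ∂μ := hm1.lintegral_prod_right'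
  have hm2' : Measurable fun t : ℝ => ∫⁻ y, ‖F y‖ₑ ^ (2 : ℝ) *
      (if ‖F y‖ ≤ t then ENNReal.ofReal (t ^ (p - 3)) else 0) ∂μ := hm2.lintegral_prod_right'
  rw [lintegral_add_left (hm1'.const_mul _), lintegral_const_mul _ hm1', lintegral_const_mul _ hm2',
    lintegral_lintegral_swap hm1.aemeasurable,
    lintegral_lintegral_swap (μ := volume.restrict (Set.Ioi 0)) (ν := μ) hm2.aemeasurable]
  rw [add_mul]
  gcongr ?_ + ?_
  · have : ∀ y, ∫⁻ t in Set.Ioi (0 : ℝ), ‖F y‖ₑ *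
        (if t < ‖F y‖ then ENNReal.ofReal (t ^ (p - 2)) else 0) =
        ENNReal.ofReal (1 / (p - 1)) * ‖F y‖ₑ ^ p := by
      intro y
      rw [lintegral_const_mul' _ _ enorm_ne_top, lintegral_Ioi_ite_lt_rpow hp1 (norm_nonneg _),
        ← ofReal_norm, ENNReal.ofReal_rpow_of_nonneg (norm_nonneg _) hp0.le,
        ← ENNReal.ofReal_mul (norm_nonneg _), ← ENNReal.ofReal_mul (by
          rw [one_div_nonneg]; linarith)]
      congr 1
      rcases (norm_nonneg (F y)).eq_or_lt with h | h
      · simp [← h, hp0.ne']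
      · rw [show p = (p - 1) + 1 by ring, Real.rpow_add_one h.ne']
        ring_nf
    simp_rw [this]
    rw [lintegral_const_mul _ (by fun_prop), ← mul_assoc, mul_assoc C₁,
      ← ENNReal.ofReal_mul (by norm_num), mul_one_div]
  · have : ∀ y, ∫⁻ t in Set.Ioi (0 : ℝ), ‖F y‖ₑ ^ (2 : ℝ) *
        (if ‖F y‖ ≤ t then ENNReal.ofReal (t ^ (p - 3)) else 0) =
        ENNReal.ofReal (1 / (2 - p)) * ‖F y‖ₑ ^ p := by
      intro y
      rcases eq_or_ne (F y) 0 with h | h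
      · simp [h, hp0]
      have h' : 0 < ‖F y‖ := norm_pos_iff.2 h
      rw [lintegral_const_mul' _ _ (by simp), lintegral_Ioi_ite_le_rpow hp2 h',
        ← ofReal_norm, ENNReal.ofReal_rpow_of_nonneg (norm_nonneg _) hp0.le,
        ENNReal.ofReal_rpow_of_nonneg (norm_nonneg _) (by norm_num),
        ← ENNReal.ofReal_mul (by positivity), ← ENNReal.ofReal_mul (by
          rw [one_div_nonneg]; linarith)]
      congr 1
      rw [← mul_div_assoc, ← Real.rpow_add h', one_div, inv_mul_eq_div]
      congr 2
      ring
    simp_rw [this]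
    rw [lintegral_const_mul _ (by fun_prop), ← mul_assoc, mul_assoc C₂,
      ← ENNReal.ofReal_mul (by norm_num), mul_one_div]

lemma Complex.enorm_star (w : ℂ) : ‖star w‖ₑ = ‖w‖ₑ := by
  rw [← ofReal_norm, norm_star, ofReal_norm]

section Kernel

variable {Z Y : Type*} [MeasurableSpace Y] {ν : Measure Y}

lemma enorm_gram_comm (K : Z → Y → ℂ) (z z' : Z) :
    ‖∫ y, K z y * star (K z' y) ∂ν‖ₑ = ‖∫ y, K z' y * star (K z y) ∂ν‖ₑ := by
  have : ∫ y, K z' y * star (K z y) ∂ν = star (∫ y, K z y * star (K z' y) ∂ν) := by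
    simp only [RCLike.star_def]
    rw [← integral_conj]
    congr 1 with y
    simp [mul_comm]
  rw [this, Complex.enorm_star]

variable [MeasurableSpace Z] {μ : Measure Z}

lemma integrable_kernel_mul [SFinite μ] [SFinite ν] {K : Z → Y → ℂ}
    (hK : StronglyMeasurable (Function.uncurry K))
    {B : ℝ≥0∞} (hB : B ≠ ∞) (hKB : ∀ z, ∫⁻ y, ‖K z y‖ₑ ∂ν ≤ B) {W : Z → ℂ} (hW : Integrable W μ) :
    Integrable (fun q : Z × Y => K q.1 q.2 * W q.1) (μ.prod ν) := by
  have hm : AEStronglyMeasurable (fun q : Z × Y => K q.1 q.2 * W q.1) (μ.prod ν) :=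
    hK.aestronglyMeasurable.mul hW.1.comp_fst
  refine ⟨hm, ?_⟩
  rw [HasFiniteIntegral, lintegral_prod _ hm.enorm]
  calc ∫⁻ z, ∫⁻ y, ‖K z y * W z‖ₑ ∂ν ∂μ ≤ ∫⁻ z, B * ‖W z‖ₑ ∂μ := by
        refine lintegral_mono fun z => ?_
        simp_rw [enorm_mul]
        rw [lintegral_mul_const' _ _ enorm_ne_top]
        gcongr
        exact hKB z
    _ = B * ∫⁻ z, ‖W z‖ₑ ∂μ := lintegral_const_mul' _ _ hB
    _ < ∞ := ENNReal.mul_lt_top hB.lt_top hW.2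

lemma lintegral_enorm_synthesis_le [SFinite μ] [SFinite ν] {K : Z → Y → ℂ}
    (hK : StronglyMeasurable (Function.uncurry K))
    {B : ℝ≥0∞} (hB : B ≠ ∞) (hKB : ∀ z, ∫⁻ y, ‖K z y‖ₑ ∂ν ≤ B) {W : Z → ℂ} (hW : Integrable W μ) :
    ∫⁻ y, ‖∫ z, K z y * W z ∂μ‖ₑ ∂ν ≤ B * ∫⁻ z, ‖W z‖ₑ ∂μ := by
  have hI := integrable_kernel_mul hK hB hKB hW
  calc ∫⁻ y, ‖∫ z, K z y * W z ∂μ‖ₑ ∂ν ≤ ∫⁻ y, ∫⁻ z, ‖K z y * W z‖ₑ ∂μ ∂ν :=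
        lintegral_mono fun y => enorm_integral_le_lintegral_enorm _
    _ = ∫⁻ z, ∫⁻ y, ‖K z y * W z‖ₑ ∂ν ∂μ :=
        (lintegral_lintegral_swap (μ := μ) (ν := ν) (f := fun z y => ‖K z y * W z‖ₑ)
          hI.1.enorm).symm
    _ ≤ ∫⁻ z, B * ‖W z‖ₑ ∂μ := by
        refine lintegral_mono fun z => ?_
        simp_rw [enorm_mul]
        rw [lintegral_mul_const' _ _ enorm_ne_top]
        gcongr
        exact hKB z
    _ = B * ∫⁻ z, ‖W z‖ₑ ∂μ := lintegral_const_mul' _ _ hB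

/-- `L²` boundedness of a synthesis operator by Schur's test applied to the Gram kernel. -/
lemma lintegral_enorm_sq_synthesis_le [SFinite μ] [SFinite ν] {K : Z → Y → ℂ}
    (hK : StronglyMeasurable (Function.uncurry K)) {M : ℝ} (hM : ∀ z y, ‖K z y‖ ≤ M)
    {B : ℝ≥0∞} (hB : B ≠ ∞) (hKB : ∀ z, ∫⁻ y, ‖K z y‖ₑ ∂ν ≤ B)
    {A : ℝ≥0∞} (hA : ∀ z, ∫⁻ z', ‖∫ y, K z y * star (K z' y) ∂ν‖ₑ ∂μ ≤ A)
    {W : Z → ℂ} (hW : Integrable W μ) (hWm : Measurable W) :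
    ∫⁻ y, ‖∫ z, K z y * W z ∂μ‖ₑ ^ (2 : ℝ) ∂ν ≤ 2 * A * ∫⁻ z, ‖W z‖ₑ ^ (2 : ℝ) ∂μ := by
  set S : Y → ℂ := fun y => ∫ z, K z y * W z ∂μ with hS
  have hKWI := integrable_kernel_mul hK hB hKB hW
  have hSm : StronglyMeasurable S := by
    refine StronglyMeasurable.integral_prod_left' (f := fun q : Z × Y => K q.1 q.2 * W q.1) ?_
    exact hK.mul (hWm.comp measurable_fst).stronglyMeasurable
  have hSb : ∀ y, ‖S y‖ ≤ M * ∫ z, ‖W z‖ ∂μ := by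
    intro y
    rw [← integral_const_mul]
    refine norm_integral_le_of_norm_le (hW.norm.const_mul M) (.of_forall fun z => ?_)
    rw [norm_mul]
    gcongr
    exact hM z y
  have hI1 : Integrable (fun q : Y × Z => star (S q.1) * (K q.2 q.1 * W q.2)) (ν.prod μ) := by
    refine (hKWI.swap).bdd_mul (c := M * ∫ z, ‖W z‖ ∂μ) ?_ ?_
    · exact (hSm.comp_measurable measurable_fst).star.aestronglyMeasurable
    · exact .of_forall fun q => by rw [norm_star]; exact hSb _
  have hSint : Integrable (fun y => star (S y) * S y) ν := by
    have := hI1.integral_prod_left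
    simpa only [integral_const_mul] using this
  have hI2 : ∀ z', Integrable (fun q : Y × Z => K z' q.1 * star (K q.2 q.1 * W q.2))
      (ν.prod μ) := by
    intro z'
    refine (hKWI.swap.mono (f := fun q : Y × Z => star (K q.2 q.1 * W q.2)) hKWI.swap.1.star
      (.of_forall fun q => (norm_star _).le)).bdd_mul (c := M) ?_ ?_
    · exact ((hK.comp_measurable (measurable_prodMk_left (x := z'))).comp_measurable
        measurable_fst).aestronglyMeasurable
    · exact .of_forall fun q => hM _ _
  have hkey : ∫ y, star (S y) * S y ∂ν =
      ∫ z', W z' * ∫ z, star (W z) * ∫ y, K z' y * star (K z y) ∂ν ∂μ ∂μ := by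
    calc ∫ y, star (S y) * S y ∂ν = ∫ y, ∫ z', star (S y) * (K z' y * W z') ∂μ ∂ν := by
          simp only [integral_const_mul, hS]
      _ = ∫ z', ∫ y, star (S y) * (K z' y * W z') ∂ν ∂μ :=
          integral_integral_swap (f := fun y z' => star (S y) * (K z' y * W z')) hI1
      _ = _ := by
          congr 1 with z'
          rw [← integral_const_mul]
          calc ∫ y, star (S y) * (K z' y * W z') ∂ν
              = W z' * ∫ y, ∫ z, K z' y * star (K z y * W z) ∂μ ∂ν := by
                rw [← integral_const_mul]
                congr 1 with y
                rw [integral_const_mul]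
                have : star (S y) = ∫ z, star (K z y * W z) ∂μ := by
                  simp only [hS, RCLike.star_def, integral_conj]
                rw [this]; ring
            _ = W z' * ∫ z, ∫ y, K z' y * star (K z y * W z) ∂ν ∂μ := by
                rw [integral_integral_swap (f := fun y z => K z' y * star (K z y * W z)) (hI2 z')]
            _ = _ := by
                rw [← integral_const_mul]
                congr 1 with z
                rw [← integral_const_mul, ← integral_const_mul, ← integral_const_mul]
                congr 1 with y
                simp only [star_mul']; ring
  have hGm : Measurable fun q : Z × Z => ‖∫ y, K q.1 y * star (K q.2 y) ∂ν‖ₑ := by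
    refine StronglyMeasurable.enorm (StronglyMeasurable.integral_prod_right'
      (f := fun q : (Z × Z) × Y => K q.1.1 q.2 * star (K q.1.2 q.2)) ?_)
    exact (hK.comp_measurable (g := fun q : (Z × Z) × Y => (q.1.1, q.2)) (by fun_prop)).mul
      (hK.comp_measurable (g := fun q : (Z × Z) × Y => (q.1.2, q.2)) (by fun_prop)).star
  have hlhs : ∫⁻ y, ‖S y‖ₑ ^ (2 : ℝ) ∂ν = ‖∫ y, star (S y) * S y ∂ν‖ₑ := by
    have e : ∀ y, star (S y) * S y = ((‖S y‖ ^ 2 : ℝ) : ℂ) := fun y => by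
      rw [RCLike.star_def, ← Complex.normSq_eq_conj_mul_self, Complex.normSq_eq_norm_sq]
    have hi : Integrable (fun y => ‖S y‖ ^ 2) ν := by
      refine hSint.norm.congr (.of_forall fun y => ?_)
      simp [sq]
    simp_rw [e]
    rw [integral_complex_ofReal, ← ofReal_norm, Complex.norm_real,
      Real.norm_of_nonneg (integral_nonneg fun y => by positivity),
      ofReal_integral_eq_lintegral_ofReal hi (.of_forall fun y => by positivity)]
    congr 1 with y
    rw [← ofReal_norm, ENNReal.ofReal_rpow_of_nonneg (norm_nonneg _) (by norm_num), Real.rpow_two]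
  rw [hlhs, hkey]
  calc _ ≤ ∫⁻ z', ‖W z'‖ₑ * ∫⁻ z, ‖W z‖ₑ * ‖∫ y, K z' y * star (K z y) ∂ν‖ₑ ∂μ ∂μ := by
        refine (enorm_integral_le_lintegral_enorm _).trans (lintegral_mono fun z' => ?_)
        rw [enorm_mul]
        gcongr
        refine (enorm_integral_le_lintegral_enorm _).trans (lintegral_mono fun z => ?_)
        rw [enorm_mul, Complex.enorm_star]
    _ ≤ ∫⁻ z', ∫⁻ z, (‖W z'‖ₑ ^ (2 : ℝ) * ‖∫ y, K z' y * star (K z y) ∂ν‖ₑ +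
          ‖W z‖ₑ ^ (2 : ℝ) * ‖∫ y, K z' y * star (K z y) ∂ν‖ₑ) ∂μ ∂μ := by
        refine lintegral_mono fun z' => ?_
        rw [← lintegral_const_mul' _ _ enorm_ne_top]
        refine lintegral_mono fun z => ?_
        rw [← mul_assoc, ← add_mul]
        gcongr
        rw [ENNReal.rpow_two, ENNReal.rpow_two, sq, sq]
        rcases le_total ‖W z'‖ₑ ‖W z‖ₑ with h | h
        · exact (mul_le_mul_left h _).trans le_add_self
        · exact (mul_le_mul_right h _).trans le_self_add
    _ = (∫⁻ z', ‖W z'‖ₑ ^ (2 : ℝ) * ∫⁻ z, ‖∫ y, K z' y * star (K z y) ∂ν‖ₑ ∂μ ∂μ) +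
        ∫⁻ z, ‖W z‖ₑ ^ (2 : ℝ) * ∫⁻ z', ‖∫ y, K z y * star (K z' y) ∂ν‖ₑ ∂μ ∂μ := by
        have hm1 : Measurable fun q : Z × Z =>
            ‖W q.1‖ₑ ^ (2 : ℝ) * ‖∫ y, K q.1 y * star (K q.2 y) ∂ν‖ₑ :=
          ((hWm.comp measurable_fst).enorm.pow_const _).mul hGm
        have hm2 : Measurable fun q : Z × Z =>
            ‖W q.2‖ₑ ^ (2 : ℝ) * ‖∫ y, K q.1 y * star (K q.2 y) ∂ν‖ₑ :=
          ((hWm.comp measurable_snd).enorm.pow_const _).mul hGm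
        have : ∀ z', ∫⁻ z, (‖W z'‖ₑ ^ (2 : ℝ) * ‖∫ y, K z' y * star (K z y) ∂ν‖ₑ +
            ‖W z‖ₑ ^ (2 : ℝ) * ‖∫ y, K z' y * star (K z y) ∂ν‖ₑ) ∂μ =
            (∫⁻ z, ‖W z'‖ₑ ^ (2 : ℝ) * ‖∫ y, K z' y * star (K z y) ∂ν‖ₑ ∂μ) +
            ∫⁻ z, ‖W z‖ₑ ^ (2 : ℝ) * ‖∫ y, K z' y * star (K z y) ∂ν‖ₑ ∂μ := fun z' =>
          lintegral_add_left (hm1.comp measurable_prodMk_left) _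
        simp_rw [this]
        rw [lintegral_add_left hm1.lintegral_prod_right']
        congr 1
        · congr 1 with z'
          exact lintegral_const_mul (‖W z'‖ₑ ^ (2 : ℝ))
            (hGm.comp (measurable_prodMk_left (x := z')))
        · rw [lintegral_lintegral_swap hm2.aemeasurable]
          congr 1 with z
          simp_rw [enorm_gram_comm K z]
          exact lintegral_const_mul _ (hGm.comp measurable_prodMk_right)
    _ ≤ (∫⁻ z', ‖W z'‖ₑ ^ (2 : ℝ) * A ∂μ) + ∫⁻ z, ‖W z‖ₑ ^ (2 : ℝ) * A ∂μ := by
        gcongr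
        · exact hA _
        · exact hA _
    _ = _ := by
        rw [lintegral_mul_const _ (by fun_prop)]
        ring

/-- `L²` boundedness of an analysis operator, by duality with the synthesis operator. -/
lemma lintegral_enorm_sq_analysis_le [SigmaFinite μ] [SFinite ν] {K : Z → Y → ℂ}
    (hK : StronglyMeasurable (Function.uncurry K)) {M : ℝ} (hM : ∀ z y, ‖K z y‖ ≤ M)
    {B : ℝ≥0∞} (hB : B ≠ ∞) (hKB : ∀ z, ∫⁻ y, ‖K z y‖ₑ ∂ν ≤ B)
    {A : ℝ≥0∞} (hA : ∀ z, ∫⁻ z', ‖∫ y, K z y * star (K z' y) ∂ν‖ₑ ∂μ ≤ A)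
    {F : Y → ℂ} (hF : Integrable F ν) (hFm : Measurable F) :
    ∫⁻ z, ‖∫ y, K z y * F y ∂ν‖ₑ ^ (2 : ℝ) ∂μ ≤ 2 * A * ∫⁻ y, ‖F y‖ₑ ^ (2 : ℝ) ∂ν := by
  set V : Z → ℂ := fun z => ∫ y, K z y * F y ∂ν with hV
  have hVm : StronglyMeasurable V := by
    refine StronglyMeasurable.integral_prod_right' (f := fun q : Z × Y => K q.1 q.2 * F q.2) ?_
    exact hK.mul (hFm.comp measurable_snd).stronglyMeasurable
  have hVb : ∀ z, ‖V z‖ ≤ M * ∫ y, ‖F y‖ ∂ν := by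
    intro z
    rw [← integral_const_mul]
    refine norm_integral_le_of_norm_le (hF.norm.const_mul M) (.of_forall fun y => ?_)
    rw [norm_mul]
    gcongr
    exact hM z y
  refine lintegral_le_of_forall_fin_meas_le _
    fun s hs hμs => ?_
  set W : Z → ℂ := s.indicator fun z => star (V z) with hW
  have hWm : Measurable W := hVm.star.measurable.indicator hs
  have hWI : Integrable W μ := by
    rw [hW, integrable_indicator_iff hs]
    refine Measure.integrableOn_of_bounded (M := M * ∫ y, ‖F y‖ ∂ν) hμs
      hVm.star.aestronglyMeasurable (.of_forall fun z => ?_)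
    rw [norm_star]; exact hVb z
  have hWV : ∀ z, W z * V z = ((‖W z‖ ^ 2 : ℝ) : ℂ) := by
    intro z
    by_cases hz : z ∈ s
    · simp only [hW, Set.indicator_of_mem hz, norm_star]
      rw [RCLike.star_def, ← Complex.normSq_eq_conj_mul_self, Complex.normSq_eq_norm_sq]
    · simp [hW, hz]
  have hX : ∫⁻ z in s, ‖V z‖ₑ ^ (2 : ℝ) ∂μ = ∫⁻ z, ‖W z‖ₑ ^ (2 : ℝ) ∂μ := by
    rw [← lintegral_indicator hs]
    congr 1 with z
    by_cases hz : z ∈ s <;> simp [hW, hz]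
  have hWWI : Integrable (fun z => ‖W z‖ ^ 2) μ := by
    have : Integrable (fun z => V z * W z) μ := hWI.bdd_mul (c := M * ∫ y, ‖F y‖ ∂ν)
      hVm.aestronglyMeasurable (.of_forall hVb)
    refine this.norm.congr (.of_forall fun z => ?_)
    simp only [mul_comm (V z), hWV, Complex.norm_real]
    exact Real.norm_of_nonneg (by positivity)
  have hXeq : ∫⁻ z, ‖W z‖ₑ ^ (2 : ℝ) ∂μ = ‖∫ z, W z * V z ∂μ‖ₑ := by
    simp_rw [hWV]
    rw [integral_complex_ofReal, ← ofReal_norm, Complex.norm_real,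
      Real.norm_of_nonneg (integral_nonneg fun y => by positivity),
      ofReal_integral_eq_lintegral_ofReal hWWI (.of_forall fun y => by positivity)]
    congr 1 with y
    rw [← ofReal_norm, ENNReal.ofReal_rpow_of_nonneg (norm_nonneg _) (by norm_num), Real.rpow_two]
  have hXtop : ∫⁻ z, ‖W z‖ₑ ^ (2 : ℝ) ∂μ ≠ ∞ := by rw [hXeq]; exact enorm_ne_top
  rw [hX]
  set X := ∫⁻ z, ‖W z‖ₑ ^ (2 : ℝ) ∂μ with hXdef
  have hswap : ∫ z, W z * V z ∂μ = ∫ y, F y * ∫ z, K z y * W z ∂μ ∂ν := by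
    have hI : Integrable (fun q : Z × Y => W q.1 * (K q.1 q.2 * F q.2)) (μ.prod ν) := by
      have := (hWI.mul_prod hF).bdd_mul (c := M) hK.aestronglyMeasurable
        (.of_forall fun q : Z × Y => hM q.1 q.2)
      refine this.congr (.of_forall fun q => ?_)
      simp only [Function.uncurry]; ring
    calc _ = ∫ z, ∫ y, W z * (K z y * F y) ∂ν ∂μ := by simp only [integral_const_mul, hV]
      _ = ∫ y, ∫ z, W z * (K z y * F y) ∂μ ∂ν :=
        integral_integral_swap (f := fun z y => W z * (K z y * F y)) hI
      _ = _ := by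
        congr 1 with y
        rw [← integral_const_mul]
        congr 1 with z
        ring
  have hSm : StronglyMeasurable fun y => ∫ z, K z y * W z ∂μ := by
    refine StronglyMeasurable.integral_prod_left' (f := fun q : Z × Y => K q.1 q.2 * W q.1) ?_
    exact hK.mul (hWm.comp measurable_fst).stronglyMeasurable
  have hsyn := lintegral_enorm_sq_synthesis_le hK hM hB hKB hA hWI hWm
  have hCS : X ≤ (∫⁻ y, ‖F y‖ₑ ^ (2 : ℝ) ∂ν) ^ (1 / (2 : ℝ)) * (2 * A * X) ^ (1 / (2 : ℝ)) := by
    calc X = ‖∫ y, F y * ∫ z, K z y * W z ∂μ ∂ν‖ₑ := by rw [hXeq, hswap]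
      _ ≤ ∫⁻ y, ‖F y‖ₑ * ‖∫ z, K z y * W z ∂μ‖ₑ ∂ν := by
        simpa only [enorm_mul] using enorm_integral_le_lintegral_enorm (μ := ν)
          (fun y => F y * ∫ z, K z y * W z ∂μ)
      _ ≤ _ := ENNReal.lintegral_mul_le_Lp_mul_Lq ν Real.HolderConjugate.two_two
        hFm.enorm.aemeasurable hSm.enorm.aemeasurable
      _ ≤ _ := by gcongr
  have hsq : X * X ≤ 2 * A * (∫⁻ y, ‖F y‖ₑ ^ (2 : ℝ) ∂ν) * X := by
    have := ENNReal.rpow_le_rpow hCS (show (0 : ℝ) ≤ 2 by norm_num)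
    rw [ENNReal.mul_rpow_of_nonneg _ _ (by norm_num), ← ENNReal.rpow_mul, ← ENNReal.rpow_mul,
      ENNReal.rpow_two, sq, show 1 / (2 : ℝ) * 2 = 1 by norm_num, ENNReal.rpow_one,
      ENNReal.rpow_one] at this
    calc X * X ≤ _ := this
      _ = _ := by ring
  rcases eq_or_ne X 0 with h0 | h0
  · rw [h0]; exact zero_le
  · exact (ENNReal.mul_le_mul_iff_left h0 hXtop).1 hsq

end Kernel

open FourierTransform in
lemma FT_eq_fourier (d : ℕ) (u : E d → ℂ) (ξ : E d) : FT d u ξ = 𝓕 u ((2 * π)⁻¹ • ξ) := by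
  rw [Real.fourier_eq', FT]
  congr 1 with v
  rw [smul_eq_mul, real_inner_smul_right]
  congr 2
  push_cast
  field_simp

open FourierTransform in
lemma integral_exp_inner_mul_eq_fourierInv (d : ℕ) (v : E d → ℂ) (x : E d) :
    ∫ ξ, Complex.exp (Complex.I * (⟪x, ξ⟫ : ℂ)) * v ξ =
      ((2 * π) ^ d : ℝ) * 𝓕⁻ (fun η => v ((2 * π) • η)) x := by
  rw [Real.fourierInv_eq']
  have h := Measure.integral_comp_smul volume
    (fun ξ : E d => Complex.exp (Complex.I * (⟪x, ξ⟫ : ℂ)) * v ξ) (2 * π)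
  have hpos : (0 : ℝ) < (2 * π) ^ d := by positivity
  rw [finrank_euclideanSpace_fin, abs_of_pos (by positivity)] at h
  have h' : ∫ η : E d, Complex.exp ((2 * π * ⟪η, x⟫ : ℝ) * Complex.I) • v ((2 * π) • η) =
      ((2 * π) ^ d)⁻¹ • ∫ ξ, Complex.exp (Complex.I * (⟪x, ξ⟫ : ℂ)) * v ξ := by
    rw [← h]
    congr 1 with η
    rw [smul_eq_mul, real_inner_smul_right, real_inner_comm, mul_comm Complex.I]
  rw [h', Complex.real_smul, ← mul_assoc, ← Complex.ofReal_mul, mul_inv_cancel₀ hpos.ne',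
    Complex.ofReal_one, one_mul]

open FourierTransform in
/-- Fourier inversion in the angular-frequency normalisation. -/
lemma integral_exp_inner_mul_FT (d : ℕ) {v : E d → ℂ} (hc : Continuous v) (hv : Integrable v)
    (hFT : Integrable (FT d v)) (x : E d) :
    ∫ ξ, Complex.exp (Complex.I * (⟪x, ξ⟫ : ℂ)) * FT d v ξ = ((2 * π) ^ d : ℝ) * v x := by
  rw [integral_exp_inner_mul_eq_fourierInv]
  have e : (fun η => FT d v ((2 * π) • η)) = 𝓕 v := by
    funext η
    rw [FT_eq_fourier, smul_smul, inv_mul_cancel₀ (by positivity), one_smul]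
  have hF : Integrable (𝓕 v) := by
    rw [← e]
    exact hFT.comp_smul (by positivity)
  rw [e, hc.fourierInv_fourier_eq hv hF]

lemma FT_self_adjoint (d : ℕ) {u v : E d → ℂ} (hu : Integrable u) (hv : Integrable v) :
    ∫ y, u y * FT d v y = ∫ η, v η * FT d u η := by
  have hI : Integrable (fun q : E d × E d =>
      u q.1 * (Complex.exp (-Complex.I * (⟪q.2, q.1⟫ : ℂ)) * v q.2)) := by
    have := (hu.mul_prod hv).bdd_mul (c := 1)
      (f := fun q : E d × E d => Complex.exp (-Complex.I * (⟪q.2, q.1⟫ : ℂ)))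
      (by fun_prop) (.of_forall fun q => by
        rw [Complex.norm_exp]; simp)
    exact this.congr (.of_forall fun q => by ring)
  calc _ = ∫ y, ∫ η, u y * (Complex.exp (-Complex.I * (⟪η, y⟫ : ℂ)) * v η) := by
        simp only [FT, integral_const_mul]
    _ = ∫ η, ∫ y, u y * (Complex.exp (-Complex.I * (⟪η, y⟫ : ℂ)) * v η) :=
        integral_integral_swap (f := fun y η =>
          u y * (Complex.exp (-Complex.I * (⟪η, y⟫ : ℂ)) * v η)) hI
    _ = _ := by
        simp only [FT, ← integral_const_mul]
        congr 1 with η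
        congr 1 with y
        rw [real_inner_comm]
        ring

lemma integral_gaussian_mul_gaussian (d : ℕ) {t a : ℝ} (ht : 0 ≤ t) (ha : 0 < a) (ζ w : E d) :
    ∫ η : E d, Complex.exp (((-t * ‖η‖ ^ 2 - a * ‖η - ζ‖ ^ 2 : ℝ) : ℂ) +
        Complex.I * (⟪w, η⟫ : ℂ)) =
      (π / (t + a) : ℝ) ^ ((d : ℂ) / 2) *
        Complex.exp (((-‖w‖ ^ 2 / (4 * (t + a)) - a * t / (t + a) * ‖ζ‖ ^ 2 : ℝ) : ℂ) +
          Complex.I * (⟪w, (a / (t + a)) • ζ⟫ : ℂ)) := by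
  have hb : 0 < t + a := by linarith
  rw [← integral_add_right_eq_self _ ((a / (t + a)) • ζ)]
  have e : ∀ η : E d, Complex.exp (((-t * ‖η + (a / (t + a)) • ζ‖ ^ 2 -
      a * ‖η + (a / (t + a)) • ζ - ζ‖ ^ 2 : ℝ) : ℂ) +
        Complex.I * (⟪w, η + (a / (t + a)) • ζ⟫ : ℂ)) =
      Complex.exp (((- a * t / (t + a) * ‖ζ‖ ^ 2 : ℝ) : ℂ) +
          Complex.I * (⟪w, (a / (t + a)) • ζ⟫ : ℂ)) *
      Complex.exp (-((t + a : ℝ) : ℂ) * ‖η‖ ^ 2 + Complex.I * (⟪w, η⟫ : ℂ)) := by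
    intro η
    rw [← Complex.exp_add]
    congr 1
    have h1 : ‖η + (a / (t + a)) • ζ‖ ^ 2 =
        ‖η‖ ^ 2 + 2 * (a / (t + a)) * ⟪η, ζ⟫ + (a / (t + a)) ^ 2 * ‖ζ‖ ^ 2 := by
      rw [norm_add_sq_real, real_inner_smul_right, norm_smul, mul_pow, Real.norm_eq_abs, sq_abs]
      ring
    have h2 : ‖η + (a / (t + a)) • ζ - ζ‖ ^ 2 =
        ‖η‖ ^ 2 + 2 * (-t / (t + a)) * ⟪η, ζ⟫ + (-t / (t + a)) ^ 2 * ‖ζ‖ ^ 2 := by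
      have : η + (a / (t + a)) • ζ - ζ = η + (-t / (t + a)) • ζ := by
        rw [add_sub_assoc]
        congr 1
        nth_rw 2 [← one_smul ℝ ζ]
        rw [← sub_smul]
        congr 1
        field_simp
        ring
      rw [this, norm_add_sq_real, real_inner_smul_right, norm_smul, mul_pow, Real.norm_eq_abs,
        sq_abs]
      ring
    have h3 : -t * ‖η + (a / (t + a)) • ζ‖ ^ 2 - a * ‖η + (a / (t + a)) • ζ - ζ‖ ^ 2 =
        - a * t / (t + a) * ‖ζ‖ ^ 2 - (t + a) * ‖η‖ ^ 2 := by
      rw [h1, h2]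
      field_simp
      ring
    rw [h3, inner_add_right]
    push_cast
    ring
  simp_rw [e]
  rw [integral_const_mul, GaussianFourier.integral_cexp_neg_mul_sq_norm_add (by simpa using hb),
    finrank_euclideanSpace_fin, mul_left_comm, ← Complex.exp_add]
  congr 1
  · push_cast; rfl
  · congr 1
    rw [Complex.I_sq]
    push_cast
    ring

lemma norm_integral_gaussian_mul_gaussian (d : ℕ) {t a : ℝ} (ht : 0 ≤ t) (ha : 0 < a)
    (ζ w : E d) :
    ‖∫ η : E d, Complex.exp (((-t * ‖η‖ ^ 2 - a * ‖η - ζ‖ ^ 2 : ℝ) : ℂ) +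
        Complex.I * (⟪w, η⟫ : ℂ))‖ =
      (π / (t + a)) ^ ((d : ℝ) / 2) *
        Real.exp (-‖w‖ ^ 2 / (4 * (t + a)) - a * t / (t + a) * ‖ζ‖ ^ 2) := by
  have hb : 0 < t + a := by linarith
  rw [integral_gaussian_mul_gaussian d ht ha, norm_mul, Complex.norm_exp,
    Complex.norm_cpow_eq_rpow_re_of_pos (by positivity)]
  congr 2
  · simp
  · simp only [Complex.add_re, Complex.ofReal_re, Complex.mul_re, Complex.I_re, Complex.I_im,
      Complex.ofReal_im]
    ring

lemma one_add_rpow_le_exp {N β r : ℝ} (hN : 0 ≤ N) (hβ : 0 < β) (hr : 0 ≤ r) :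
    (1 + r) ^ N ≤ ((N + 1) / β) ^ (N + 1) * Real.exp β * Real.exp (β * r) := by
  have h1 : (1 + r) ^ N ≤ (1 + r) ^ (N + 1) :=
    Real.rpow_le_rpow_of_exponent_le (by linarith) (by linarith)
  have h2 : 1 + r ≤ (N + 1) / β * Real.exp (β * (1 + r) / (N + 1)) := by
    have := Real.add_one_le_exp (β * (1 + r) / (N + 1))
    have h3 : (N + 1) / β * (β * (1 + r) / (N + 1)) = 1 + r := by field_simp
    calc 1 + r = (N + 1) / β * (β * (1 + r) / (N + 1)) := h3.symm
      _ ≤ _ := by gcongr; linarith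
  refine h1.trans ((Real.rpow_le_rpow (by linarith) h2 (by linarith)).trans_eq ?_)
  rw [Real.mul_rpow (by positivity) (by positivity), ← Real.exp_mul, mul_assoc, ← Real.exp_add]
  congr 2
  field_simp

lemma integrable_exp_gaussian_mul_exp_inner (d : ℕ) {a : ℝ} (ha : 0 < a) (ζ w : E d) :
    Integrable fun η : E d => Complex.exp (((-a * ‖η - ζ‖ ^ 2 : ℝ) : ℂ) +
      Complex.I * (⟪w, η⟫ : ℂ)) := by
  have h := ((GaussianFourier.integrable_cexp_neg_mul_sq_norm_add (b := (a : ℂ))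
    (by simpa using ha) 0 (0 : E d)).comp_sub_right ζ).bdd_mul (c := 1)
    (f := fun η : E d => Complex.exp (Complex.I * (⟪w, η⟫ : ℂ))) (by fun_prop)
    (.of_forall fun q => by rw [Complex.norm_exp]; simp)
  refine h.congr (.of_forall fun η => ?_)
  simp only [← Complex.exp_add]
  congr 1
  push_cast
  ring

/-- The Fourier transform of a Gaussian centred at `ζ` times the Bessel symbol decays
exponentially and inherits the size of the symbol at `ζ`. -/
lemma exists_norm_integral_bessel_mul_gaussian_le (d : ℕ) {σ a : ℝ} (hσ : 0 ≤ σ) (ha : 0 < a) :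
    ∃ C : ℝ, 0 ≤ C ∧ ∀ ζ w : E d,
      ‖∫ η : E d, (((1 + ‖η‖ ^ 2) ^ (-σ) : ℝ) : ℂ) *
        Complex.exp (((-a * ‖η - ζ‖ ^ 2 : ℝ) : ℂ) + Complex.I * (⟪w, η⟫ : ℂ))‖ ≤
      C * (1 + ‖ζ‖ ^ 2) ^ (-σ) * Real.exp (-(‖w‖ / 2)) := by
  have hwt : ∀ (w : E d) (t : ℝ), 0 ≤ t →
      -‖w‖ ^ 2 / (4 * (t + a)) ≤ (t + a) / 2 - ‖w‖ / 2 := by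
    intro w t ht
    have hb : 0 < t + a := by linarith
    rw [div_le_iff₀ (by positivity)]
    nlinarith [sq_nonneg (‖w‖ - (t + a)), sq_nonneg (t + a)]
  rcases hσ.eq_or_lt with h0 | hσ
  · refine ⟨(π / a) ^ ((d : ℝ) / 2) * Real.exp (a / 2), by positivity, fun ζ w => ?_⟩
    have h := norm_integral_gaussian_mul_gaussian d le_rfl ha ζ w
    simp only [neg_zero, zero_mul, zero_sub, zero_add, mul_zero, zero_div, sub_zero] at h
    simp only [← h0, neg_zero, Real.rpow_zero, Complex.ofReal_one, one_mul, mul_one, neg_mul]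
    rw [h, mul_assoc, ← Real.exp_add]
    gcongr
    have := hwt w 0 le_rfl
    simp only [zero_add] at this
    linarith
  set β : ℝ := a / (1 + a) with hβ
  have hβ0 : 0 < β := by positivity
  set m : ℝ := min (1 / 2) β with hm
  have hm0 : 0 < m := lt_min (by norm_num) hβ0
  set L : ℝ := ((σ + 1) / β) ^ (σ + 1) * Real.exp β with hL
  have hL0 : 0 < L := by positivity
  refine ⟨(π / a) ^ ((d : ℝ) / 2) * Real.exp (a / 2) * (m ^ (-σ) + 2 ^ σ * L), by positivity,
    fun ζ w => ?_⟩
  have hΓ : 0 < Real.Gamma σ := Real.Gamma_pos_of_pos hσ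
  set G : E d → ℂ := fun η =>
    Complex.exp (((-a * ‖η - ζ‖ ^ 2 : ℝ) : ℂ) + Complex.I * (⟪w, η⟫ : ℂ)) with hG
  have hGI : Integrable G := integrable_exp_gaussian_mul_exp_inner d ha ζ w
  have hexpI : ∀ c : ℝ, 0 < c → IntegrableOn (fun t : ℝ => t ^ (σ - 1) * Real.exp (-(c * t)))
      (Set.Ioi 0) := by
    intro c hc
    have := integrableOn_rpow_mul_exp_neg_mul_rpow (s := σ - 1) (p := 1) (b := c) (by linarith)
      one_pos hc
    simpa using this
  have hsub : ∀ η : E d, (((1 + ‖η‖ ^ 2) ^ (-σ) : ℝ) : ℂ) * G η = (Real.Gamma σ : ℂ)⁻¹ *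
      ∫ t in Set.Ioi (0 : ℝ), ((t ^ (σ - 1) * Real.exp (-((1 + ‖η‖ ^ 2) * t)) : ℝ) : ℂ) * G η := by
    intro η
    rw [integral_mul_const, integral_complex_ofReal,
      Real.integral_rpow_mul_exp_neg_mul_Ioi hσ (by positivity), ← mul_assoc,
      ← Complex.ofReal_inv, ← Complex.ofReal_mul]
    congr 2
    rw [one_div, Real.inv_rpow (by positivity), Real.rpow_neg (by positivity)]
    field_simp
  have hprod : Integrable (fun q : E d × ℝ =>
      ((q.2 ^ (σ - 1) * Real.exp (-((1 + ‖q.1‖ ^ 2) * q.2)) : ℝ) : ℂ) * G q.1)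
      (volume.prod (volume.restrict (Set.Ioi 0))) := by
    have h1 : Integrable (fun q : E d × ℝ => ‖G q.1‖ * (q.2 ^ (σ - 1) * Real.exp (-(1 * q.2))))
      (volume.prod (volume.restrict (Set.Ioi 0))) := hGI.norm.mul_prod (hexpI 1 one_pos)
    have hGm : Measurable G := by fun_prop
    refine h1.mono' (Measurable.aestronglyMeasurable (by fun_prop)) ?_
    have h2 : ∀ᵐ q : E d × ℝ ∂(volume.prod (volume.restrict (Set.Ioi 0))), 0 < q.2 := by
      refine Measure.quasiMeasurePreserving_snd.ae ?_
      filter_upwards [ae_restrict_mem measurableSet_Ioi] with t ht using ht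
    filter_upwards [h2] with q hq
    rw [norm_mul, Complex.norm_real, Real.norm_of_nonneg (by positivity), mul_comm]
    gcongr
    nlinarith [mul_nonneg (sq_nonneg ‖q.1‖) hq.le]
  change ‖∫ η : E d, (((1 + ‖η‖ ^ 2) ^ (-σ) : ℝ) : ℂ) * G η‖ ≤ _
  simp_rw [hsub]
  rw [integral_const_mul, norm_mul, norm_inv, Complex.norm_real, Real.norm_of_nonneg hΓ.le,
    integral_integral_swap (f := fun (η : E d) (t : ℝ) =>
      ((t ^ (σ - 1) * Real.exp (-((1 + ‖η‖ ^ 2) * t)) : ℝ) : ℂ) * G η) hprod]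
  set D : ℝ := (π / a) ^ ((d : ℝ) / 2) * Real.exp (a / 2) * Real.exp (-(‖w‖ / 2)) with hD
  have hbound : ∀ t ∈ Set.Ioi (0 : ℝ),
      ‖∫ η : E d, ((t ^ (σ - 1) * Real.exp (-((1 + ‖η‖ ^ 2) * t)) : ℝ) : ℂ) * G η‖ ≤
      D * (t ^ (σ - 1) * Real.exp (-((1 / 2 + β * ‖ζ‖ ^ 2) * t)) +
        Real.exp (-(β * ‖ζ‖ ^ 2)) * (t ^ (σ - 1) * Real.exp (-(1 / 2 * t)))) := by
    intro t ht
    have ht : 0 < t := ht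
    have hb : 0 < t + a := by linarith
    have e1 : ∀ η : E d, ((t ^ (σ - 1) * Real.exp (-((1 + ‖η‖ ^ 2) * t)) : ℝ) : ℂ) * G η =
        ((t ^ (σ - 1) * Real.exp (-t) : ℝ) : ℂ) *
          Complex.exp (((-t * ‖η‖ ^ 2 - a * ‖η - ζ‖ ^ 2 : ℝ) : ℂ) +
            Complex.I * (⟪w, η⟫ : ℂ)) := by
      intro η
      simp only [hG]
      push_cast
      rw [mul_assoc, mul_assoc, ← Complex.exp_add, ← Complex.exp_add]
      congr 2
      ring
    simp_rw [e1]
    rw [integral_const_mul, norm_mul, norm_integral_gaussian_mul_gaussian d ht.le ha,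
      Complex.norm_real, Real.norm_of_nonneg (by positivity)]
    have e2 : Real.exp (-‖w‖ ^ 2 / (4 * (t + a)) - a * t / (t + a) * ‖ζ‖ ^ 2) ≤
        Real.exp ((t + a) / 2 - ‖w‖ / 2) *
          (Real.exp (-(β * ‖ζ‖ ^ 2 * t)) + Real.exp (-(β * ‖ζ‖ ^ 2))) := by
      rw [sub_eq_add_neg (-‖w‖ ^ 2 / (4 * (t + a))), Real.exp_add]
      gcongr
      · exact hwt w t ht.le
      · rcases le_total t 1 with h1 | h1
        · refine le_trans ?_ (le_add_of_nonneg_right (Real.exp_pos _).le)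
          refine Real.exp_le_exp.2 (neg_le_neg ?_)
          have : β * t ≤ a * t / (t + a) := by
            rw [hβ, div_mul_eq_mul_div]
            gcongr
          nlinarith [sq_nonneg ‖ζ‖]
        · refine le_trans ?_ (le_add_of_nonneg_left (Real.exp_pos _).le)
          gcongr
          rw [hβ, div_le_div_iff₀ (by positivity) (by positivity)]
          nlinarith [mul_nonneg (sq_nonneg a) (sub_nonneg.2 h1)]
    have e3 : (π / (t + a)) ^ ((d : ℝ) / 2) ≤ (π / a) ^ ((d : ℝ) / 2) := by
      gcongr
      linarith
    calc _ ≤ t ^ (σ - 1) * Real.exp (-t) * ((π / a) ^ ((d : ℝ) / 2) *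
          (Real.exp ((t + a) / 2 - ‖w‖ / 2) *
          (Real.exp (-(β * ‖ζ‖ ^ 2 * t)) + Real.exp (-(β * ‖ζ‖ ^ 2))))) := by gcongr
      _ = _ := by
        have e4 : Real.exp ((t + a) / 2 - ‖w‖ / 2) =
            Real.exp (t / 2) * Real.exp (a / 2) * Real.exp (-(‖w‖ / 2)) := by
          rw [← Real.exp_add, ← Real.exp_add]; ring_nf
        have e5 : Real.exp (-((1 / 2 + β * ‖ζ‖ ^ 2) * t)) =
            Real.exp (-t) * Real.exp (t / 2) * Real.exp (-(β * ‖ζ‖ ^ 2 * t)) := by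
          rw [← Real.exp_add, ← Real.exp_add]; ring_nf
        have e6 : Real.exp (-(1 / 2 * t)) = Real.exp (-t) * Real.exp (t / 2) := by
          rw [← Real.exp_add]; ring_nf
        rw [e4, e5, e6, hD]
        ring
  have hc1 : 0 < 1 / 2 + β * ‖ζ‖ ^ 2 := by positivity
  have hI1 := hexpI _ hc1
  have hI2 := (hexpI (1 / 2) (by norm_num)).const_mul (Real.exp (-(β * ‖ζ‖ ^ 2)))
  have hle := norm_integral_le_of_norm_le ((hI1.add hI2).const_mul D)
    (by filter_upwards [ae_restrict_mem measurableSet_Ioi] with t ht using hbound t ht)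
  simp only [Pi.add_apply] at hle
  rw [integral_const_mul, integral_add hI1 hI2, integral_const_mul,
    Real.integral_rpow_mul_exp_neg_mul_Ioi hσ hc1,
    Real.integral_rpow_mul_exp_neg_mul_Ioi hσ (by norm_num)] at hle
  have f1 : (1 / (1 / 2 + β * ‖ζ‖ ^ 2)) ^ σ ≤ m ^ (-σ) * (1 + ‖ζ‖ ^ 2) ^ (-σ) := by
    rw [← Real.mul_rpow hm0.le (by positivity), Real.rpow_neg (by positivity),
      ← Real.inv_rpow (by positivity), one_div]
    gcongr
    rw [mul_add, mul_one]
    exact add_le_add (min_le_left _ _) (mul_le_mul_of_nonneg_right (min_le_right _ _) (sq_nonneg _))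
  have f2 : Real.exp (-(β * ‖ζ‖ ^ 2)) ≤ L * (1 + ‖ζ‖ ^ 2) ^ (-σ) := by
    have := one_add_rpow_le_exp hσ.le hβ0 (sq_nonneg ‖ζ‖)
    rw [Real.rpow_neg (by positivity), Real.exp_neg, ← div_eq_mul_inv, le_div_iff₀ (by positivity),
      inv_mul_le_iff₀ (Real.exp_pos _), mul_comm (Real.exp _)]
    exact this
  calc _ ≤ (Real.Gamma σ)⁻¹ * (D * ((1 / (1 / 2 + β * ‖ζ‖ ^ 2)) ^ σ * Real.Gamma σ +
        Real.exp (-(β * ‖ζ‖ ^ 2)) * ((1 / (1 / 2)) ^ σ * Real.Gamma σ))) := by gcongr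
    _ = D * ((1 / (1 / 2 + β * ‖ζ‖ ^ 2)) ^ σ + 2 ^ σ * Real.exp (-(β * ‖ζ‖ ^ 2))) := by
        rw [one_div_one_div]
        field_simp
    _ ≤ D * (m ^ (-σ) * (1 + ‖ζ‖ ^ 2) ^ (-σ) + 2 ^ σ * (L * (1 + ‖ζ‖ ^ 2) ^ (-σ))) := by gcongr
    _ = _ := by rw [hD]; ring

lemma integrable_exp_neg_mul_norm (d : ℕ) {c : ℝ} (hc : 0 < c) :
    Integrable fun x : E d => Real.exp (-(c * ‖x‖)) := by
  have h := (integrable_one_add_norm (E := E d) (μ := volume) (r := d + 1)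
    (by rw [finrank_euclideanSpace_fin]; exact lt_add_one _)).const_mul
    (((d + 1 + 1) / c) ^ ((d : ℝ) + 1 + 1) * Real.exp c)
  refine h.mono' (by fun_prop) (.of_forall fun x => ?_)
  have := one_add_rpow_le_exp (N := d + 1) (by positivity) hc (norm_nonneg x)
  rw [Real.norm_of_nonneg (by positivity), Real.exp_neg, Real.rpow_neg (by positivity),
    ← div_eq_mul_inv, le_div_iff₀ (by positivity), inv_mul_le_iff₀ (by positivity), mul_comm]
  exact this

lemma integrable_exp_neg_mul_norm_sq (d : ℕ) {c : ℝ} (hc : 0 < c) :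
    Integrable fun x : E d => Real.exp (-(c * ‖x‖ ^ 2)) := by
  have h := (integrable_exp_gaussian_mul_exp_inner d hc 0 0).norm
  refine h.congr (.of_forall fun x => ?_)
  simp only [Complex.norm_exp, inner_zero_left, Complex.ofReal_zero, mul_zero, add_zero, sub_zero,
    Complex.ofReal_re, neg_mul]

/-- The frequency-side profile of a wave packet, weighted by a Bessel quotient. -/
def besselPacket (d : ℕ) (k : ℝ) (z : P d) (η : E d) : ℂ :=
  (((1 + ‖z.2‖ ^ 2) ^ (k / 2) * (1 + ‖η‖ ^ 2) ^ (-(k / 2)) : ℝ) : ℂ) *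
    Complex.exp (((-(1 / 2) * ‖η - z.2‖ ^ 2 : ℝ) : ℂ) + Complex.I * (⟪z.1, η - z.2⟫ : ℂ))

/-- The integral kernel of the weighted wave packet transform. -/
def besselKernel (d : ℕ) (k : ℝ) (z : P d) (y : E d) : ℂ := FT d (besselPacket d k z) y

lemma continuous_besselPacket (d : ℕ) (k : ℝ) (z : P d) : Continuous (besselPacket d k z) := by
  have : ∀ η : E d, 1 + ‖η‖ ^ 2 ≠ 0 := fun η => by positivity
  unfold besselPacket
  have h : Continuous fun η : E d => (1 + ‖η‖ ^ 2) ^ (-(k / 2)) :=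
    Continuous.rpow_const (by fun_prop) fun η => Or.inl (this η)
  fun_prop

lemma norm_besselPacket_le (d : ℕ) {k : ℝ} (hk : 0 ≤ k) (z : P d) (η : E d) :
    ‖besselPacket d k z η‖ ≤ (1 + ‖z.2‖ ^ 2) ^ (k / 2) * Real.exp (-(1 / 2 * ‖η - z.2‖ ^ 2)) := by
  have h1 : (1 + ‖η‖ ^ 2) ^ (-(k / 2)) ≤ 1 :=
    Real.rpow_le_one_of_one_le_of_nonpos (by nlinarith [norm_nonneg η]) (by linarith)
  rw [besselPacket, norm_mul, Complex.norm_exp, Complex.norm_real,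
    Real.norm_of_nonneg (by positivity)]
  have h2 : (((-(1 / 2) * ‖η - z.2‖ ^ 2 : ℝ) : ℂ) + Complex.I * (⟪z.1, η - z.2⟫ : ℂ)).re =
      -(1 / 2 * ‖η - z.2‖ ^ 2) := by
    simp only [Complex.add_re, Complex.ofReal_re, Complex.mul_re, Complex.I_re, Complex.I_im,
      Complex.ofReal_im]
    ring
  rw [h2]
  gcongr
  exact mul_le_of_le_one_right (by positivity) h1

lemma integrable_besselPacket (d : ℕ) {k : ℝ} (hk : 0 ≤ k) (z : P d) :
    Integrable (besselPacket d k z) :=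
  (((integrable_exp_neg_mul_norm_sq d (c := 1 / 2) (by norm_num)).comp_sub_right z.2).const_mul
    ((1 + ‖z.2‖ ^ 2) ^ (k / 2))).mono' (continuous_besselPacket d k z).aestronglyMeasurable
    (.of_forall (norm_besselPacket_le d hk z))

lemma besselKernel_eq (d : ℕ) (k : ℝ) (z : P d) (y : E d) :
    besselKernel d k z y = (((1 + ‖z.2‖ ^ 2) ^ (k / 2) : ℝ) : ℂ) *
      Complex.exp (-Complex.I * (⟪z.1, z.2⟫ : ℂ)) *
      ∫ η : E d, (((1 + ‖η‖ ^ 2) ^ (-(k / 2)) : ℝ) : ℂ) *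
        Complex.exp (((-(1 / 2) * ‖η - z.2‖ ^ 2 : ℝ) : ℂ) + Complex.I * (⟪z.1 - y, η⟫ : ℂ)) := by
  rw [← integral_const_mul, besselKernel, FT]
  congr 1 with η
  rw [besselPacket, inner_sub_right, inner_sub_left, real_inner_comm η y, Complex.ofReal_mul]
  have : Complex.exp (-Complex.I * (⟪η, y⟫ : ℂ)) *
      Complex.exp (((-(1 / 2) * ‖η - z.2‖ ^ 2 : ℝ) : ℂ) +
        Complex.I * ((⟪z.1, η⟫ - ⟪z.1, z.2⟫ : ℝ) : ℂ)) =
      Complex.exp (-Complex.I * (⟪z.1, z.2⟫ : ℂ)) *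
      Complex.exp (((-(1 / 2) * ‖η - z.2‖ ^ 2 : ℝ) : ℂ) +
        Complex.I * ((⟪z.1, η⟫ - ⟪η, y⟫ : ℝ) : ℂ)) := by
    rw [← Complex.exp_add, ← Complex.exp_add]
    congr 1
    push_cast
    ring
  linear_combination (((1 + ‖z.2‖ ^ 2) ^ (k / 2) : ℝ) : ℂ) *
    (((1 + ‖η‖ ^ 2) ^ (-(k / 2)) : ℝ) : ℂ) * this

lemma stronglyMeasurable_besselKernel (d : ℕ) (k : ℝ) :
    StronglyMeasurable (Function.uncurry (besselKernel d k)) := by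
  refine StronglyMeasurable.integral_prod_right' (f := fun q : (P d × E d) × E d =>
    Complex.exp (-Complex.I * (⟪q.2, q.1.2⟫ : ℂ)) * besselPacket d k q.1.1 q.2) ?_
  unfold besselPacket
  exact Measurable.stronglyMeasurable (by fun_prop)

lemma exists_norm_besselKernel_le (d : ℕ) {k : ℝ} (hk : 0 ≤ k) :
    ∃ C : ℝ, 0 ≤ C ∧ ∀ z y, ‖besselKernel d k z y‖ ≤ C * Real.exp (-(1 / 2 * ‖y - z.1‖)) := by
  obtain ⟨C, hC, h⟩ := exists_norm_integral_bessel_mul_gaussian_le d (σ := k / 2) (a := 1 / 2)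
    (by linarith) (by norm_num)
  refine ⟨C, hC, fun z y => ?_⟩
  have h1 : ‖Complex.exp (-Complex.I * (⟪z.1, z.2⟫ : ℂ))‖ = 1 := by
    rw [Complex.norm_exp]; simp
  rw [besselKernel_eq, norm_mul, norm_mul, h1, Complex.norm_real,
    Real.norm_of_nonneg (by positivity), mul_one]
  have hp : (0 : ℝ) < 1 + ‖z.2‖ ^ 2 := by positivity
  calc _ ≤ (1 + ‖z.2‖ ^ 2) ^ (k / 2) *
        (C * (1 + ‖z.2‖ ^ 2) ^ (-(k / 2)) * Real.exp (-(‖z.1 - y‖ / 2))) := by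
        gcongr
        exact h z.2 (z.1 - y)
    _ = _ := by
        rw [Real.rpow_neg hp.le, norm_sub_rev, div_eq_inv_mul, one_div]
        field_simp

lemma exists_lintegral_besselKernel_le (d : ℕ) {k : ℝ} (hk : 0 ≤ k) :
    ∃ B : ℝ≥0∞, B ≠ ∞ ∧ ∀ z, ∫⁻ y, ‖besselKernel d k z y‖ₑ ≤ B := by
  obtain ⟨C, hC, h⟩ := exists_norm_besselKernel_le d hk
  have hI := (integrable_exp_neg_mul_norm d (c := 1 / 2) (by norm_num)).const_mul C
  refine ⟨∫⁻ y : E d, ‖C * Real.exp (-(1 / 2 * ‖y‖))‖ₑ, hI.2.ne, fun z => ?_⟩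
  rw [← lintegral_sub_right_eq_self (fun y : E d => ‖C * Real.exp (-(1 / 2 * ‖y‖))‖ₑ) z.1]
  refine lintegral_mono fun y => ?_
  refine enorm_le_iff_norm_le.2 ?_
  rw [Real.norm_of_nonneg (by positivity)]
  exact h z y

lemma integrable_besselKernel (d : ℕ) {k : ℝ} (hk : 0 ≤ k) (z : P d) :
    Integrable (besselKernel d k z) := by
  obtain ⟨B, hB, h⟩ := exists_lintegral_besselKernel_le d hk
  exact ⟨((stronglyMeasurable_besselKernel d k).comp_measurable
    measurable_prodMk_left).aestronglyMeasurable, (h z).trans_lt hB.lt_top⟩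

lemma integral_besselKernel_mul_star (d : ℕ) {k : ℝ} (hk : 0 ≤ k) (z z' : P d) :
    ∫ y, besselKernel d k z y * star (besselKernel d k z' y) =
      ((2 * π) ^ d : ℝ) * ∫ η, besselPacket d k z η * star (besselPacket d k z' η) := by
  have hs : Integrable fun y => star (besselKernel d k z' y) :=
    (integrable_besselKernel d hk z').mono
      (continuous_star.comp_aestronglyMeasurable (integrable_besselKernel d hk z').1)
      (.of_forall fun y => (norm_star _).le)
  have h := FT_self_adjoint d hs (integrable_besselPacket d hk z)
  have e : ∀ η, FT d (fun y => star (besselKernel d k z' y)) η =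
      ((2 * π) ^ d : ℝ) * star (besselPacket d k z' η) := by
    intro η
    have h1 := integral_exp_inner_mul_FT d (continuous_besselPacket d k z')
      (integrable_besselPacket d hk z') (integrable_besselKernel d hk z') η
    have h2 := congrArg star h1
    simp only [RCLike.star_def] at h2 ⊢
    rw [← integral_conj, map_mul, Complex.conj_ofReal] at h2
    rw [← h2, FT]
    congr 1 with y
    rw [map_mul, ← Complex.exp_conj, map_mul, Complex.conj_I, Complex.conj_ofReal,
      real_inner_comm]
    rfl
  calc _ = ∫ y, star (besselKernel d k z' y) * FT d (besselPacket d k z) y := by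
        congr 1 with y
        rw [mul_comm]
        rfl
    _ = _ := by
        rw [h, ← integral_const_mul]
        congr 1 with η
        rw [e]
        ring

lemma one_add_sq_norm_add_le {F : Type*} [SeminormedAddCommGroup F] (a b : F) :
    1 + ‖a + b‖ ^ 2 ≤ 2 * ((1 + ‖a‖ ^ 2) * (1 + ‖b‖ ^ 2)) := by
  have h := norm_add_le a b
  nlinarith [norm_nonneg (a + b), norm_nonneg a, norm_nonneg b, sq_nonneg (‖a‖ - ‖b‖),
    mul_nonneg (sq_nonneg ‖a‖) (sq_nonneg ‖b‖), pow_le_pow_left₀ (norm_nonneg _) h 2]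

lemma besselPacket_mul_star (d : ℕ) (k : ℝ) (z z' : P d) (η : E d) :
    besselPacket d k z η * star (besselPacket d k z' η) =
      ((((1 + ‖z.2‖ ^ 2) * (1 + ‖z'.2‖ ^ 2)) ^ (k / 2) *
        Real.exp (-(1 / 4 * ‖z'.2 - z.2‖ ^ 2)) : ℝ) : ℂ) *
      Complex.exp (Complex.I * ((⟪z'.1, z'.2⟫ - ⟪z.1, z.2⟫ : ℝ) : ℂ)) *
      ((((1 + ‖η‖ ^ 2) ^ (-k) : ℝ) : ℂ) *
        Complex.exp (((-1 * ‖η - (1 / 2 : ℝ) • (z.2 + z'.2)‖ ^ 2 : ℝ) : ℂ) +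
          Complex.I * (⟪z.1 - z'.1, η⟫ : ℂ))) := by
  have hq : (1 + ‖η‖ ^ 2) ^ (-k) = (1 + ‖η‖ ^ 2) ^ (-(k / 2)) * (1 + ‖η‖ ^ 2) ^ (-(k / 2)) := by
    rw [← Real.rpow_add (by positivity)]
    congr 1
    ring
  have hpar : ‖η - (1 / 2 : ℝ) • (z.2 + z'.2)‖ ^ 2 =
      1 / 2 * ‖η - z.2‖ ^ 2 + 1 / 2 * ‖η - z'.2‖ ^ 2 - 1 / 4 * ‖z'.2 - z.2‖ ^ 2 := by
    have e1 : η - (1 / 2 : ℝ) • (z.2 + z'.2) = (1 / 2 : ℝ) • ((η - z.2) + (η - z'.2)) := by module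
    have e2 : z'.2 - z.2 = (η - z.2) - (η - z'.2) := by abel
    have e3 := parallelogram_law_with_norm ℝ (η - z.2) (η - z'.2)
    rw [e1, e2, norm_smul, mul_pow, Real.norm_of_nonneg (by norm_num)]
    linear_combination (1 / 4 : ℝ) * e3
  have hexp : Complex.exp (((-(1 / 2) * ‖η - z.2‖ ^ 2 : ℝ) : ℂ) +
        Complex.I * (⟪z.1, η - z.2⟫ : ℂ)) *
      Complex.exp (((-(1 / 2) * ‖η - z'.2‖ ^ 2 : ℝ) : ℂ) +
        -Complex.I * (⟪z'.1, η - z'.2⟫ : ℂ)) =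
      ((Real.exp (-(1 / 4 * ‖z'.2 - z.2‖ ^ 2)) : ℝ) : ℂ) *
      Complex.exp (Complex.I * ((⟪z'.1, z'.2⟫ - ⟪z.1, z.2⟫ : ℝ) : ℂ)) *
      Complex.exp (((-1 * ‖η - (1 / 2 : ℝ) • (z.2 + z'.2)‖ ^ 2 : ℝ) : ℂ) +
        Complex.I * (⟪z.1 - z'.1, η⟫ : ℂ)) := by
    rw [hpar, Complex.ofReal_exp, ← Complex.exp_add, ← Complex.exp_add, ← Complex.exp_add,
      inner_sub_right, inner_sub_right, inner_sub_left]
    congr 1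
    push_cast
    ring
  rw [besselPacket, besselPacket, RCLike.star_def, map_mul, ← Complex.exp_conj, map_add, map_mul,
    Complex.conj_ofReal, Complex.conj_ofReal, Complex.conj_ofReal, Complex.conj_I, hq,
    Real.mul_rpow (by positivity) (by positivity)]
  push_cast at hexp ⊢
  linear_combination (((1 + ‖z.2‖ ^ 2) ^ (k / 2) : ℝ) : ℂ) *
    (((1 + ‖z'.2‖ ^ 2) ^ (k / 2) : ℝ) : ℂ) *
    (((1 + ‖η‖ ^ 2) ^ (-(k / 2)) : ℝ) : ℂ) ^ 2 * hexp

lemma exists_norm_besselKernel_gram_le (d : ℕ) {k : ℝ} (hk : 0 ≤ k) :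
    ∃ C : ℝ, 0 ≤ C ∧ ∀ z z' : P d,
      ‖∫ y, besselKernel d k z y * star (besselKernel d k z' y)‖ ≤
        C * (Real.exp (-(1 / 2 * ‖z'.1 - z.1‖)) * Real.exp (-(1 / 8 * ‖z'.2 - z.2‖ ^ 2))) := by
  obtain ⟨C, hC, h⟩ := exists_norm_integral_bessel_mul_gaussian_le d (σ := k) (a := 1) hk one_pos
  refine ⟨(2 * π) ^ d * (2 ^ k * (((k + 1) / (1 / 2)) ^ (k + 1) * Real.exp (1 / 2)) * C),
    by positivity, fun z z' => ?_⟩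
  set ζ : E d := (1 / 2 : ℝ) • (z.2 + z'.2) with hζ
  set r : ℝ := ‖(1 / 2 : ℝ) • (z'.2 - z.2)‖ ^ 2 with hr
  have hr' : r = 1 / 4 * ‖z'.2 - z.2‖ ^ 2 := by
    rw [hr, norm_smul, mul_pow]
    norm_num
  have hr0 : 0 ≤ r := sq_nonneg _
  have hz : 1 + ‖z.2‖ ^ 2 ≤ 2 * ((1 + ‖ζ‖ ^ 2) * (1 + r)) := by
    have := one_add_sq_norm_add_le ζ (-((1 / 2 : ℝ) • (z'.2 - z.2)))
    rwa [norm_neg, show ζ + -((1 / 2 : ℝ) • (z'.2 - z.2)) = z.2 by rw [hζ]; module] at this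
  have hz' : 1 + ‖z'.2‖ ^ 2 ≤ 2 * ((1 + ‖ζ‖ ^ 2) * (1 + r)) := by
    have := one_add_sq_norm_add_le ζ ((1 / 2 : ℝ) • (z'.2 - z.2))
    rwa [show ζ + (1 / 2 : ℝ) • (z'.2 - z.2) = z'.2 by rw [hζ]; module] at this
  have hpow : ((1 + ‖z.2‖ ^ 2) * (1 + ‖z'.2‖ ^ 2)) ^ (k / 2) ≤
      2 ^ k * (1 + ‖ζ‖ ^ 2) ^ k * (1 + r) ^ k := by
    calc _ ≤ ((2 * ((1 + ‖ζ‖ ^ 2) * (1 + r))) ^ (2 : ℝ)) ^ (k / 2) := by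
          refine Real.rpow_le_rpow (by positivity) ?_ (by positivity)
          rw [Real.rpow_two, sq (2 * _)]
          exact mul_le_mul hz hz' (by positivity) (by positivity)
      _ = _ := by
          rw [← Real.rpow_mul (by positivity), Real.mul_rpow (by norm_num) (by positivity),
            Real.mul_rpow (by positivity) (by positivity), mul_div_cancel₀ _ (by norm_num),
            mul_assoc]
  have hphase : ‖Complex.exp (Complex.I * ((⟪z'.1, z'.2⟫ - ⟪z.1, z.2⟫ : ℝ) : ℂ))‖ = 1 := by
    rw [mul_comm]
    exact Complex.norm_exp_ofReal_mul_I _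
  rw [integral_besselKernel_mul_star d hk]
  simp_rw [besselPacket_mul_star]
  rw [integral_const_mul, norm_mul, norm_mul, norm_mul, hphase, Complex.norm_real,
    Complex.norm_real, Real.norm_of_nonneg (by positivity), Real.norm_of_nonneg (by positivity),
    mul_one]
  have hk2 := one_add_rpow_le_exp hk (β := 1 / 2) (by norm_num) hr0
  have hp : (0 : ℝ) < 1 + ‖ζ‖ ^ 2 := by positivity
  calc _ ≤ (2 * π) ^ d * ((2 ^ k * (1 + ‖ζ‖ ^ 2) ^ k *
          (((k + 1) / (1 / 2)) ^ (k + 1) * Real.exp (1 / 2) * Real.exp (1 / 2 * r))) *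
        Real.exp (-r) * (C * (1 + ‖ζ‖ ^ 2) ^ (-k) * Real.exp (-(‖z.1 - z'.1‖ / 2)))) := by
        rw [← hr']
        gcongr
        · exact hpow.trans (by gcongr)
        · exact h ζ (z.1 - z'.1)
    _ = (2 * π) ^ d * (2 ^ k * (((k + 1) / (1 / 2)) ^ (k + 1) * Real.exp (1 / 2)) * C) *
        (Real.exp (-(‖z.1 - z'.1‖ / 2)) * (Real.exp (1 / 2 * r) * Real.exp (-r))) := by
        rw [Real.rpow_neg hp.le]
        field_simp
    _ = _ := by
        rw [← Real.exp_add, hr', norm_sub_rev]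
        congr 3
        · ring
        · ring

lemma exists_lintegral_besselKernel_gram_le (d : ℕ) {k : ℝ} (hk : 0 ≤ k) :
    ∃ A : ℝ≥0∞, A ≠ ∞ ∧ ∀ z : P d,
      ∫⁻ z', ‖∫ y, besselKernel d k z y * star (besselKernel d k z' y)‖ₑ ≤ A := by
  obtain ⟨C, hC, h⟩ := exists_norm_besselKernel_gram_le d hk
  have hI : Integrable fun z : P d =>
      C * (Real.exp (-(1 / 2 * ‖z.1‖)) * Real.exp (-(1 / 8 * ‖z.2‖ ^ 2))) :=
    ((integrable_exp_neg_mul_norm d (by norm_num)).mul_prod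
      (integrable_exp_neg_mul_norm_sq d (by norm_num))).const_mul C
  have : (volume : Measure (P d)).IsAddRightInvariant :=
    inferInstanceAs ((volume : Measure (E d)).prod volume).IsAddRightInvariant
  refine ⟨_, hI.2.ne, fun z => ?_⟩
  rw [← lintegral_sub_right_eq_self (fun z : P d => ‖C * (Real.exp (-(1 / 2 * ‖z.1‖)) *
    Real.exp (-(1 / 8 * ‖z.2‖ ^ 2)))‖ₑ) z]
  refine lintegral_mono fun z' => enorm_le_iff_norm_le.2 ?_
  rw [Real.norm_of_nonneg (by positivity)]
  exact h z z'

lemma besselKernel_zero (d : ℕ) (z : P d) (y : E d) :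
    besselKernel d 0 z y = (((2 * π) ^ ((d : ℝ) / 2) : ℝ) : ℂ) * pkbar d z y := by
  have h := integral_gaussian_mul_gaussian d (t := 0) (a := 1 / 2) le_rfl (by norm_num) z.2
    (z.1 - y)
  have hc : ((π / (0 + 1 / 2) : ℝ) : ℂ) ^ ((d : ℂ) / 2) = (((2 * π) ^ ((d : ℝ) / 2) : ℝ) : ℂ) := by
    rw [show π / (0 + 1 / 2) = 2 * π by ring, Complex.ofReal_cpow (by positivity)]
    push_cast
    rfl
  rw [hc] at h
  rw [besselKernel_eq]
  simp only [zero_div, neg_zero, Real.rpow_zero, Complex.ofReal_one, one_mul]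
  have e : ∀ η : E d, -0 * ‖η‖ ^ 2 - 1 / 2 * ‖η - z.2‖ ^ 2 = -(1 / 2) * ‖η - z.2‖ ^ 2 :=
    fun η => by ring
  simp_rw [e] at h
  rw [h, pkbar, mul_left_comm, Complex.ofReal_exp, ← Complex.exp_add, ← Complex.exp_add]
  congr 2
  rw [norm_sub_rev, zero_add, div_self (by norm_num), one_smul, inner_sub_left]
  push_cast
  ring

open FourierTransform in
lemma exists_schwartz_eq_besselh (d : ℕ) (k : ℝ) (f : SchwartzMap (E d) ℂ) :
    ∃ F : SchwartzMap (E d) ℂ, ⇑F = besselh d 1 k f ∧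
      ∀ ξ, FT d F ξ = (((1 + ‖ξ‖ ^ 2) ^ (k / 2) : ℝ) : ℂ) * FT d f ξ := by
  set m : E d → ℝ := fun η => (1 + ‖(2 * π) • η‖ ^ 2) ^ (k / 2) with hm
  have hmt : m.HasTemperateGrowth :=
    (Function.hasTemperateGrowth_one_add_norm_sq_rpow (E d) (k / 2)).comp
      (g := fun ξ : E d => (1 + ‖ξ‖ ^ 2) ^ (k / 2)) (f := fun η : E d => (2 * π) • η)
      (by fun_prop)
  have hp : (0 : ℝ) < (2 * π) ^ d := by positivity
  set G := SchwartzMap.smulLeftCLM ℂ m (𝓕 f) with hG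
  have hGa : ∀ η, G η = (m η : ℂ) * FT d f ((2 * π) • η) := by
    intro η
    rw [hG, SchwartzMap.smulLeftCLM_apply_apply hmt, SchwartzMap.fourier_coe, FT_eq_fourier,
      smul_smul, inv_mul_cancel₀ (by positivity), one_smul, Complex.real_smul]
  refine ⟨𝓕⁻ G, ?_, fun ξ => ?_⟩
  · funext x
    rw [besselh]
    simp_rw [mul_assoc, one_mul]
    rw [integral_exp_inner_mul_eq_fourierInv, ← mul_assoc,
      inv_mul_cancel₀ (by exact_mod_cast hp.ne'),
      one_mul, SchwartzMap.fourierInv_coe]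
    rw [show ⇑G = _ from funext hGa]
  · rw [FT_eq_fourier, ← SchwartzMap.fourier_coe, FourierTransform.fourier_fourierInv_eq, hGa, hm]
    simp only [smul_smul]
    rw [mul_inv_cancel₀ (by positivity), one_smul]

lemma integral_besselKernel_mul (d : ℕ) {k : ℝ} (hk : 0 ≤ k) {F : E d → ℂ} (hF : Integrable F)
    (z : P d) :
    ∫ y, besselKernel d k z y * F y = ∫ η, besselPacket d k z η * FT d F η := by
  rw [← FT_self_adjoint d hF (integrable_besselPacket d hk z)]
  congr 1 with y
  exact mul_comm _ _

lemma integral_besselKernel_mul_besselh (d : ℕ) {k : ℝ} (hk : 0 ≤ k) (f : SchwartzMap (E d) ℂ)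
    (z : P d) :
    ∫ y, besselKernel d k z y * besselh d 1 k f y =
      (((2 * π) ^ ((d : ℝ) / 2) * (1 + ‖z.2‖ ^ 2) ^ (k / 2) : ℝ) : ℂ) * stft d f z := by
  obtain ⟨F, hF, hFT⟩ := exists_schwartz_eq_besselh d k f
  have h0 : ∫ y, besselKernel d 0 z y * f y =
      (((2 * π) ^ ((d : ℝ) / 2) : ℝ) : ℂ) * stft d f z := by
    rw [stft, ← integral_const_mul]
    congr 1 with y
    rw [besselKernel_zero]
    ring
  rw [← hF, integral_besselKernel_mul d hk F.integrable, Complex.ofReal_mul,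
    mul_comm (((2 * π) ^ ((d : ℝ) / 2) : ℝ) : ℂ), mul_assoc, ← h0,
    integral_besselKernel_mul d le_rfl f.integrable, ← integral_const_mul]
  congr 1 with η
  have hp : (0 : ℝ) < 1 + ‖η‖ ^ 2 := by positivity
  have e : (((1 + ‖η‖ ^ 2) ^ (-(k / 2)) : ℝ) : ℂ) * (((1 + ‖η‖ ^ 2) ^ (k / 2) : ℝ) : ℂ) = 1 := by
    rw [← Complex.ofReal_mul, ← Real.rpow_add hp, neg_add_cancel, Real.rpow_zero,
      Complex.ofReal_one]
  rw [hFT, besselPacket, besselPacket, Complex.ofReal_mul]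
  simp only [zero_div, neg_zero, Real.rpow_zero, Complex.ofReal_one, one_mul]
  linear_combination (((1 + ‖z.2‖ ^ 2) ^ (k / 2) : ℝ) : ℂ) *
    Complex.exp (((-(1 / 2) * ‖η - z.2‖ ^ 2 : ℝ) : ℂ) + Complex.I * (⟪z.1, η - z.2⟫ : ℂ)) *
    FT d f η * e

lemma exists_setLIntegral_one_add_norm_sq_rpow_le {d : ℕ} (hd : 1 ≤ d) :
    ∃ C : ℝ≥0∞, C ≠ ∞ ∧ ∀ s t : ℝ, 0 ≤ s → 0 < t →
      ∫⁻ ξ : E d in {ξ | t < (1 + ‖ξ‖ ^ 2) ^ ((d : ℝ) / 2) * s},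
        ENNReal.ofReal ((1 + ‖ξ‖ ^ 2) ^ (-(d : ℝ))) ≤ C * ENNReal.ofReal (s / t) := by
  have hd0 : (0 : ℝ) < d := by exact_mod_cast hd
  have hI : Integrable fun ξ : E d => (1 + ‖ξ‖ ^ 2) ^ (-(d : ℝ)) := by
    have := integrable_rpow_neg_one_add_norm_sq (E := E d) (μ := volume) (r := 2 * d)
      (by rw [finrank_euclideanSpace_fin]; linarith)
    refine this.congr (.of_forall fun ξ => ?_)
    change (1 + ‖ξ‖ ^ 2) ^ (-(2 * d : ℝ) / 2) = _
    congr 1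
    ring
  set J : ℝ := ∫ ξ : E d, (1 + ‖ξ‖ ^ 2) ^ (-(d : ℝ)) with hJ
  refine ⟨ENNReal.ofReal (2 ^ (d : ℝ) * J), ENNReal.ofReal_ne_top, fun s t hs ht => ?_⟩
  rcases hs.eq_or_lt with rfl | hs
  · simp [ht.not_gt]
  set ρ : ℝ := (t / s) ^ (1 / (d : ℝ)) with hρ
  have hρ0 : 0 < ρ := by positivity
  have hρd : ρ ^ (d : ℝ) = t / s := by
    rw [hρ, ← Real.rpow_mul (by positivity), one_div, inv_mul_cancel₀ hd0.ne', Real.rpow_one]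
  have hρI : Integrable fun ξ : E d => (1 + ‖ρ⁻¹ • ξ‖ ^ 2) ^ (-(d : ℝ)) :=
    hI.comp_smul (by positivity)
  have hpt : ∀ ξ : E d, t < (1 + ‖ξ‖ ^ 2) ^ ((d : ℝ) / 2) * s →
      (1 + ‖ξ‖ ^ 2) ^ (-(d : ℝ)) ≤
        2 ^ (d : ℝ) * (ρ ^ 2) ^ (-(d : ℝ)) * (1 + ‖ρ⁻¹ • ξ‖ ^ 2) ^ (-(d : ℝ)) := by
    intro ξ hξ
    have h1 : (ρ ^ 2) ^ ((d : ℝ) / 2) < (1 + ‖ξ‖ ^ 2) ^ ((d : ℝ) / 2) := by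
      rw [← Real.rpow_two, ← Real.rpow_mul hρ0.le, mul_div_cancel₀ _ two_ne_zero, hρd,
        div_lt_iff₀ hs]
      exact hξ
    have h2 : ρ ^ 2 < 1 + ‖ξ‖ ^ 2 :=
      (Real.rpow_lt_rpow_iff (by positivity) (by positivity) (by positivity)).1 h1
    have h3 : 2⁻¹ * ρ ^ 2 * (1 + ‖ρ⁻¹ • ξ‖ ^ 2) ≤ 1 + ‖ξ‖ ^ 2 := by
      have : ρ ^ 2 * ‖ρ⁻¹ • ξ‖ ^ 2 = ‖ξ‖ ^ 2 := by
        rw [norm_smul, norm_inv, Real.norm_of_nonneg hρ0.le]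
        field_simp
      nlinarith
    have h4 : (2 : ℝ) ^ (d : ℝ) = (2⁻¹ : ℝ) ^ (-(d : ℝ)) := by
      rw [Real.rpow_neg (by norm_num), Real.inv_rpow (by norm_num), inv_inv]
    rw [h4, ← Real.mul_rpow (by norm_num) (by positivity),
      ← Real.mul_rpow (by positivity) (by positivity)]
    exact Real.rpow_le_rpow_of_nonpos (by positivity) h3 (by linarith)
  have hmeas : MeasurableSet {ξ : E d | t < (1 + ‖ξ‖ ^ 2) ^ ((d : ℝ) / 2) * s} :=
    measurableSet_lt measurable_const (by fun_prop)
  calc _ ≤ ∫⁻ ξ : E d in {ξ | t < (1 + ‖ξ‖ ^ 2) ^ ((d : ℝ) / 2) * s}, ENNReal.ofReal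
        (2 ^ (d : ℝ) * (ρ ^ 2) ^ (-(d : ℝ)) * (1 + ‖ρ⁻¹ • ξ‖ ^ 2) ^ (-(d : ℝ))) :=
        setLIntegral_mono' hmeas fun ξ hξ => ENNReal.ofReal_le_ofReal (hpt ξ hξ)
    _ ≤ ∫⁻ ξ : E d, ENNReal.ofReal
        (2 ^ (d : ℝ) * (ρ ^ 2) ^ (-(d : ℝ)) * (1 + ‖ρ⁻¹ • ξ‖ ^ 2) ^ (-(d : ℝ))) :=
        setLIntegral_le_lintegral _ _
    _ = ENNReal.ofReal (2 ^ (d : ℝ) * (ρ ^ 2) ^ (-(d : ℝ)) * (ρ ^ (d : ℝ) * J)) := by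
        rw [← ofReal_integral_eq_lintegral_ofReal (hρI.const_mul _)
          (.of_forall fun ξ => by positivity), integral_const_mul,
          Measure.integral_comp_smul volume (fun ξ : E d => (1 + ‖ξ‖ ^ 2) ^ (-(d : ℝ))) ρ⁻¹,
          finrank_euclideanSpace_fin, abs_of_pos (by positivity), inv_pow, inv_inv,
          Real.rpow_natCast ρ d, smul_eq_mul]
    _ = _ := by
        rw [← ENNReal.ofReal_mul (by positivity)]
        congr 1
        have h5 : (ρ ^ 2) ^ (-(d : ℝ)) = (ρ ^ (d : ℝ))⁻¹ * (ρ ^ (d : ℝ))⁻¹ := by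
          rw [Real.rpow_neg (by positivity), sq, Real.mul_rpow hρ0.le hρ0.le, mul_inv]
        rw [h5, hρd]
        field_simp

lemma lintegral_enorm_stft_rpow_two_le (d : ℕ) :
    ∃ C : ℝ≥0∞, C ≠ ∞ ∧ ∀ f : SchwartzMap (E d) ℂ,
      ∫⁻ z, ‖stft d f z‖ₑ ^ (2 : ℝ) ≤ C * ∫⁻ y, ‖besselh d 1 0 f y‖ₑ ^ (2 : ℝ) := by
  obtain ⟨M, hM0, hM⟩ := exists_norm_besselKernel_le d le_rfl
  obtain ⟨B, hB, hKB⟩ := exists_lintegral_besselKernel_le d le_rfl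
  obtain ⟨A, hA, hKA⟩ := exists_lintegral_besselKernel_gram_le d le_rfl
  refine ⟨2 * A, by finiteness, fun f => ?_⟩
  obtain ⟨F, hF, -⟩ := exists_schwartz_eq_besselh d 0 f
  have h := lintegral_enorm_sq_analysis_le (μ := (volume : Measure (P d)))
    (stronglyMeasurable_besselKernel d 0) (M := M)
    (fun z y => (hM z y).trans (mul_le_of_le_one_right hM0 (by
      rw [Real.exp_le_one_iff]
      have := norm_nonneg (y - z.1)
      linarith))) hB hKB hKA F.integrable F.continuous.measurable
  rw [hF] at h
  refine le_trans (lintegral_mono fun z => ?_) h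
  gcongr
  rw [integral_besselKernel_mul_besselh d le_rfl, enorm_mul, zero_div, Real.rpow_zero, mul_one]
  refine le_mul_of_one_le_left' ?_
  rw [← ofReal_norm, Complex.norm_real, Real.norm_of_nonneg (by positivity),
    ENNReal.one_le_ofReal]
  exact Real.one_le_rpow (by linarith [Real.pi_gt_three]) (by positivity)

lemma exists_norm_integral_besselKernel_mul_le (d : ℕ) {k : ℝ} (hk : 0 ≤ k) :
    ∃ B : ℝ≥0∞, B ≠ ∞ ∧ ∀ F : E d → ℂ, Integrable F → Measurable F →
      ∃ a : E d → ℂ, StronglyMeasurable a ∧ ∫⁻ x, ‖a x‖ₑ ≤ B * ∫⁻ y, ‖F y‖ₑ ∧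
        ∀ z : P d, ‖∫ y, besselKernel d k z y * F y‖ ≤ ‖a z.1‖ := by
  obtain ⟨M, hM0, hM⟩ := exists_norm_besselKernel_le d hk
  set H : E d → E d → ℂ := fun y x => ((M * Real.exp (-(1 / 2 * ‖y - x‖)) : ℝ) : ℂ) with hH
  have hHm : StronglyMeasurable (Function.uncurry H) :=
    Measurable.stronglyMeasurable (by unfold Function.uncurry; fun_prop)
  obtain ⟨B', hB', hHB⟩ : ∃ B' : ℝ≥0∞, B' ≠ ∞ ∧ ∀ y, ∫⁻ x, ‖H y x‖ₑ ≤ B' := by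
    have hI : Integrable fun x : E d => ((M * Real.exp (-(1 / 2 * ‖x‖)) : ℝ) : ℂ) :=
      ((integrable_exp_neg_mul_norm d (c := 1 / 2) (by norm_num)).const_mul M).ofReal
    refine ⟨_, hI.2.ne, fun y => ?_⟩
    rw [← lintegral_sub_right_eq_self
      (fun x : E d => ‖((M * Real.exp (-(1 / 2 * ‖x‖)) : ℝ) : ℂ)‖ₑ) y]
    simp only [hH, norm_sub_rev y, le_refl]
  refine ⟨B', hB', fun F hF hFm => ?_⟩
  set a : E d → ℂ := fun x => ∫ y, H y x * (‖F y‖ : ℂ) with ha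
  have ham : StronglyMeasurable a := by
    refine StronglyMeasurable.integral_prod_left' (f := fun q : E d × E d =>
      H q.1 q.2 * (‖F q.1‖ : ℂ)) ?_
    exact hHm.mul (Measurable.stronglyMeasurable (by fun_prop))
  have hle : ∀ z : P d, ‖∫ y, besselKernel d k z y * F y‖ ≤ ‖a z.1‖ := by
    intro z
    have e : a z.1 = ((∫ y, M * Real.exp (-(1 / 2 * ‖y - z.1‖)) * ‖F y‖ : ℝ) : ℂ) := by
      rw [← integral_complex_ofReal]
      simp only [ha, hH, Complex.ofReal_mul]
    rw [e, Complex.norm_real]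
    refine le_trans (norm_integral_le_of_norm_le (g := fun y =>
      M * Real.exp (-(1 / 2 * ‖y - z.1‖)) * ‖F y‖) ?_ (.of_forall fun y => ?_))
      (Real.le_norm_self _)
    · refine hF.norm.bdd_mul (c := M) (by fun_prop) (.of_forall fun y => ?_)
      rw [Real.norm_of_nonneg (by positivity)]
      refine mul_le_of_le_one_right hM0 ?_
      rw [Real.exp_le_one_iff]
      have := norm_nonneg (y - z.1)
      linarith
    · rw [norm_mul]
      gcongr
      exact hM z y
  refine ⟨a, ham, ?_, hle⟩
  have := lintegral_enorm_synthesis_le hHm hB' hHB (W := fun y => (‖F y‖ : ℂ)) hF.norm.ofReal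
  refine this.trans_eq ?_
  congr 2 with y
  rw [← ofReal_norm, Complex.norm_real, norm_norm, ofReal_norm]

lemma lintegral_enorm_stft_rpow_le {d : ℕ} (hd : 1 ≤ d) {p k : ℝ} (hp1 : 1 < p) (hp2 : p < 2)
    (hk : k = 2 * d * (1 / p - 1 / 2)) :
    ∃ C : ℝ≥0∞, C ≠ ∞ ∧ ∀ f : SchwartzMap (E d) ℂ,
      ∫⁻ z, ‖stft d f z‖ₑ ^ p ≤ C * ∫⁻ y, ‖besselh d 1 k f y‖ₑ ^ p := by
  have hp0 : 0 < p := by linarith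
  have hkp : k * p = d * (2 - p) := by rw [hk]; field_simp
  have hk0 : 0 ≤ k := by
    have : 0 ≤ k * p := hkp ▸ mul_nonneg (by positivity) (by linarith)
    exact nonneg_of_mul_nonneg_left this hp0
  obtain ⟨M, hM0, hM⟩ := exists_norm_besselKernel_le d hk0
  obtain ⟨B, hB, hKB⟩ := exists_lintegral_besselKernel_le d hk0
  obtain ⟨A, hA, hKA⟩ := exists_lintegral_besselKernel_gram_le d hk0
  obtain ⟨S, hS, hw⟩ := exists_setLIntegral_one_add_norm_sq_rpow_le hd
  set w : P d → ℝ≥0∞ := fun z => ENNReal.ofReal ((1 + ‖z.2‖ ^ 2) ^ (-(d : ℝ))) with hwdef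
  have hwm : Measurable w := by fun_prop
  set T : (E d → ℂ) → P d → ℂ := fun F z =>
    (((1 + ‖z.2‖ ^ 2) ^ ((d : ℝ) / 2) : ℝ) : ℂ) * ∫ y, besselKernel d k z y * F y with hT
  have hMb : ∀ z y, ‖besselKernel d k z y‖ ≤ M := fun z y =>
    (hM z y).trans (mul_le_of_le_one_right hM0 (by
      rw [Real.exp_le_one_iff]
      have := norm_nonneg (y - z.1)
      linarith))
  have hKF : ∀ F : E d → ℂ, Integrable F → ∀ z, Integrable fun y => besselKernel d k z y * F y :=
    fun F hF z => hF.bdd_mul ((stronglyMeasurable_besselKernel d k).comp_measurable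
      measurable_prodMk_left).aestronglyMeasurable (.of_forall (hMb z))
  have hTm : ∀ F : E d → ℂ, Measurable F → StronglyMeasurable (T F) := by
    intro F hF
    refine StronglyMeasurable.mul (Measurable.stronglyMeasurable (by fun_prop)) ?_
    refine StronglyMeasurable.integral_prod_right'
      (f := fun q : P d × E d => besselKernel d k q.1 q.2 * F q.2) ?_
    exact (stronglyMeasurable_besselKernel d k).mul (hF.comp measurable_snd).stronglyMeasurable
  obtain ⟨B', hB', hdom⟩ := exists_norm_integral_besselKernel_mul_le d hk0
  have h1 : ∀ F : E d → ℂ, Integrable F → Measurable F → ∀ t : ℝ, 0 < t →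
      (volume.withDensity w) {z | t < ‖T F z‖} ≤
        (S * B') * (∫⁻ y, ‖F y‖ₑ) * ENNReal.ofReal (1 / t) := by
    intro F hF hFm t ht
    obtain ⟨a, ham, haB, hle⟩ := hdom F hF hFm
    set U : Set (P d) := {z | t < (1 + ‖z.2‖ ^ 2) ^ ((d : ℝ) / 2) * ‖a z.1‖} with hU
    have hUm : MeasurableSet U := by
      have := ham.measurable
      exact measurableSet_lt measurable_const (by fun_prop)
    have hsub : {z | t < ‖T F z‖} ⊆ U := by
      intro z hz
      have hz : t < ‖T F z‖ := hz
      refine hz.trans_le ?_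
      rw [hT, norm_mul, Complex.norm_real, Real.norm_of_nonneg (by positivity)]
      gcongr
      exact hle z
    calc _ ≤ (volume.withDensity w) U := measure_mono hsub
      _ = ∫⁻ z, U.indicator w z := by
          rw [withDensity_apply _ hUm, lintegral_indicator hUm]
      _ = ∫⁻ x, ∫⁻ ξ, U.indicator w (x, ξ) := by
          rw [Measure.volume_eq_prod, lintegral_prod _ (hwm.indicator hUm).aemeasurable]
      _ ≤ ∫⁻ x, S * (‖a x‖ₑ * ENNReal.ofReal (1 / t)) := by
          refine lintegral_mono fun x => ?_
          have h := hw ‖a x‖ t (norm_nonneg _) ht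
          rw [← lintegral_indicator (measurableSet_lt measurable_const (by fun_prop))] at h
          rw [div_eq_mul_one_div ‖a x‖ t, ENNReal.ofReal_mul (norm_nonneg _), ofReal_norm] at h
          exact h
      _ = S * (∫⁻ x, ‖a x‖ₑ) * ENNReal.ofReal (1 / t) := by
          rw [lintegral_const_mul' _ _ hS, lintegral_mul_const' _ _ ENNReal.ofReal_ne_top,
            mul_assoc]
      _ ≤ S * (B' * ∫⁻ y, ‖F y‖ₑ) * ENNReal.ofReal (1 / t) := by
          gcongr
      _ = _ := by ring
  have hwe : ∀ (z : P d) {q : ℝ}, 0 ≤ q → w z * ‖(((1 + ‖z.2‖ ^ 2) ^ ((d : ℝ) / 2) : ℝ) : ℂ)‖ₑ ^ q =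
      ENNReal.ofReal ((1 + ‖z.2‖ ^ 2) ^ (-(d : ℝ) + d / 2 * q)) := by
    intro z q hq
    rw [← ofReal_norm, Complex.norm_real, Real.norm_of_nonneg (by positivity),
      ENNReal.ofReal_rpow_of_nonneg (by positivity) hq, hwdef,
      ← ENNReal.ofReal_mul (by positivity), ← Real.rpow_mul (by positivity),
      ← Real.rpow_add (by positivity)]
  have h2 : ∀ F : E d → ℂ, Integrable F → Measurable F →
      ∫⁻ z, ‖T F z‖ₑ ^ (2 : ℝ) ∂(volume.withDensity w) ≤ (2 * A) * ∫⁻ y, ‖F y‖ₑ ^ (2 : ℝ) := by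
    intro F hF hFm
    rw [lintegral_withDensity_eq_lintegral_mul _ hwm
      ((hTm F hFm).measurable.enorm.pow_const _)]
    refine le_of_eq_of_le (lintegral_congr fun z => ?_) (lintegral_enorm_sq_analysis_le
      (μ := (volume : Measure (P d))) (stronglyMeasurable_besselKernel d k) hMb hB hKB hKA hF hFm)
    rw [Pi.mul_apply, hT, enorm_mul, ENNReal.mul_rpow_of_nonneg _ _ (by norm_num), ← mul_assoc,
      hwe z (by norm_num)]
    have : -(d : ℝ) + d / 2 * 2 = 0 := by ring
    rw [this, Real.rpow_zero, ENNReal.ofReal_one, one_mul]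
  refine ⟨ENNReal.ofReal p * ((S * B') * ENNReal.ofReal (2 / (p - 1)) +
    (2 * A) * ENNReal.ofReal (4 / (2 - p))), by finiteness, fun f => ?_⟩
  obtain ⟨F, hF, -⟩ := exists_schwartz_eq_besselh d k f
  have h := lintegral_rpow_le_of_weak_one_strong_two hp1 hp2 T (S * B') (2 * A)
    (ν := volume.withDensity w) (fun F _ hFm => (hTm F hFm).aestronglyMeasurable)
    (fun F G hF hG z => by
      simp only [hT, Pi.add_apply, mul_add]
      rw [integral_add (hKF F hF z) (hKF G hG z), mul_add])
    h1 h2 F.integrable F.continuous.measurable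
  rw [lintegral_withDensity_eq_lintegral_mul _ hwm
    ((hTm F F.continuous.measurable).measurable.enorm.pow_const _), hF] at h
  refine le_trans (lintegral_mono fun z => ?_) h
  have hz : (0 : ℝ) < 1 + ‖z.2‖ ^ 2 := by positivity
  rw [Pi.mul_apply, hT]
  simp only
  rw [integral_besselKernel_mul_besselh d hk0, Complex.ofReal_mul, enorm_mul, enorm_mul, enorm_mul,
    ENNReal.mul_rpow_of_nonneg _ _ hp0.le, ENNReal.mul_rpow_of_nonneg _ _ hp0.le,
    ENNReal.mul_rpow_of_nonneg _ _ hp0.le, ← mul_assoc, ← mul_assoc, ← mul_assoc, hwe z hp0.le]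
  refine le_mul_of_one_le_left' ?_
  have e1 : ‖(((1 + ‖z.2‖ ^ 2) ^ (k / 2) : ℝ) : ℂ)‖ₑ ^ p =
      ENNReal.ofReal ((1 + ‖z.2‖ ^ 2) ^ (d / 2 * (2 - p))) := by
    rw [← ofReal_norm, Complex.norm_real, Real.norm_of_nonneg (by positivity),
      ENNReal.ofReal_rpow_of_nonneg (by positivity) hp0.le, ← Real.rpow_mul hz.le]
    congr 2
    linear_combination hkp / 2
  have e2 : 1 ≤ ‖(((2 * π) ^ ((d : ℝ) / 2) : ℝ) : ℂ)‖ₑ ^ p := by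
    refine ENNReal.one_le_rpow ?_ hp0
    rw [← ofReal_norm, Complex.norm_real, Real.norm_of_nonneg (by positivity),
      ENNReal.one_le_ofReal]
    exact Real.one_le_rpow (by linarith [Real.pi_gt_three]) (by positivity)
  rw [e1, mul_right_comm, ← ENNReal.ofReal_mul (by positivity), ← Real.rpow_add hz]
  have e3 : -(d : ℝ) + d / 2 * p + d / 2 * (2 - p) = 0 := by ring
  rw [e3, Real.rpow_zero, ENNReal.ofReal_one, one_mul]
  exact e2

lemma norm_pkbar_le_one (d : ℕ) (z : P d) (y : E d) : ‖pkbar d z y‖ ≤ 1 := by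
  have h : ‖Complex.exp (-Complex.I * (⟪y, z.2⟫ : ℂ))‖ = 1 := by rw [Complex.norm_exp]; simp
  rw [pkbar, norm_mul, h, one_mul, Complex.norm_real, Real.norm_of_nonneg (by positivity),
    Real.exp_le_one_iff]
  have := sq_nonneg ‖y - z.1‖
  linarith

lemma stronglyMeasurable_stft (d : ℕ) {u : E d → ℂ} (hu : Measurable u) :
    StronglyMeasurable (stft d u) := by
  refine StronglyMeasurable.integral_prod_right'
    (f := fun q : P d × E d => u q.2 * pkbar d q.1 q.2) ?_
  unfold pkbar
  exact Measurable.stronglyMeasurable (by fun_prop)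

lemma exists_norm_stft_le (d : ℕ) (u : SchwartzMap (E d) ℂ) :
    ∃ a : E d → ℂ, Integrable a ∧
      ∀ z, ‖stft d u z‖ ≤ ‖a z.1‖ * (1 + ‖z.2‖ ^ 2) ^ (-((d : ℝ) + 1) / 2) := by
  have hk : (0 : ℝ) ≤ d + 1 := by positivity
  obtain ⟨B, hB, h⟩ := exists_norm_integral_besselKernel_mul_le d hk
  obtain ⟨F, hF, -⟩ := exists_schwartz_eq_besselh d (d + 1) u
  obtain ⟨a, ham, haB, ha⟩ := h F F.integrable F.continuous.measurable
  refine ⟨a, ⟨ham.aestronglyMeasurable, haB.trans_lt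
    (ENNReal.mul_lt_top hB.lt_top F.integrable.2)⟩, fun z => ?_⟩
  have hz := ha z
  have hp : (0 : ℝ) < 1 + ‖z.2‖ ^ 2 := by positivity
  rw [hF, integral_besselKernel_mul_besselh d hk, norm_mul, Complex.norm_real,
    Real.norm_of_nonneg (by positivity)] at hz
  have hc : 1 ≤ (2 * π) ^ ((d : ℝ) / 2) :=
    Real.one_le_rpow (by linarith [Real.pi_gt_three]) (by positivity)
  rw [neg_div, Real.rpow_neg hp.le, ← div_eq_mul_inv, le_div_iff₀ (by positivity), mul_comm]
  refine le_trans ?_ hz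
  gcongr
  exact le_mul_of_one_le_left (by positivity) hc

lemma integrable_one_add_norm_sq_rpow (d : ℕ) :
    Integrable fun ξ : E d => (1 + ‖ξ‖ ^ 2) ^ (-((d : ℝ) + 1) / 2) :=
  integrable_rpow_neg_one_add_norm_sq (by rw [finrank_euclideanSpace_fin]; exact lt_add_one _)

lemma integrable_stft (d : ℕ) (u : SchwartzMap (E d) ℂ) : Integrable (stft d u) := by
  obtain ⟨a, ha, h⟩ := exists_norm_stft_le d u
  exact (ha.norm.mul_prod (integrable_one_add_norm_sq_rpow d)).mono'
    (stronglyMeasurable_stft d u.continuous.measurable).aestronglyMeasurable (.of_forall h)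

lemma integrable_norm_stft_rpow (d : ℕ) (u : SchwartzMap (E d) ℂ) {p : ℝ} (hp : 1 < p) :
    Integrable fun z => ‖stft d u z‖ ^ p := by
  set M : ℝ := ∫ y, ‖u y‖ with hM
  have hb : ∀ z, ‖stft d u z‖ ≤ M := fun z =>
    norm_integral_le_of_norm_le u.integrable.norm (.of_forall fun y => by
      rw [norm_mul]
      exact mul_le_of_le_one_right (norm_nonneg _) (norm_pkbar_le_one d z y))
  have hm := (stronglyMeasurable_stft d u.continuous.measurable).measurable
  refine ((integrable_stft d u).norm.const_mul (M ^ (p - 1))).mono'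
    (Measurable.aestronglyMeasurable (by fun_prop)) (.of_forall fun z => ?_)
  rw [Real.norm_of_nonneg (by positivity)]
  calc ‖stft d u z‖ ^ p = ‖stft d u z‖ ^ (p - 1) * ‖stft d u z‖ := by
        rw [← Real.rpow_add_one' (norm_nonneg _) (by linarith), sub_add_cancel]
    _ ≤ _ := mul_le_mul_of_nonneg_right
        (Real.rpow_le_rpow (norm_nonneg _) (hb z) (by linarith)) (norm_nonneg _)

lemma integral_star_pkbar_mul_stft (d : ℕ) (u : SchwartzMap (E d) ℂ) (y : E d) :
    ∫ z, star (pkbar d z y) * stft d u z = ((2 * π) ^ d * π ^ ((d : ℝ) / 2) : ℝ) * u y := by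
  obtain ⟨a, ha, hale⟩ := exists_norm_stft_le d u
  have hI : Integrable fun z => star (pkbar d z y) * stft d u z := by
    refine (integrable_stft d u).bdd_mul (c := 1) ?_ (.of_forall fun z => ?_)
    · refine continuous_star.comp_aestronglyMeasurable ?_
      unfold pkbar
      exact Measurable.aestronglyMeasurable (by fun_prop)
    · rw [norm_star]
      exact norm_pkbar_le_one d z y
  have hin : ∀ x : E d, ∫ ξ, star (pkbar d (x, ξ) y) * stft d u (x, ξ) =
      (((2 * π) ^ d : ℝ) : ℂ) * u y * ((Real.exp (-1 * ‖x - y‖ ^ 2) : ℝ) : ℂ) := by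
    intro x
    set v : E d → ℂ := fun y => u y * ((Real.exp (-‖y - x‖ ^ 2 / 2) : ℝ) : ℂ) with hv
    have hvc : Continuous v := u.continuous.mul (by fun_prop)
    have hvI : Integrable v := by
      refine u.integrable.mono hvc.aestronglyMeasurable (.of_forall fun y => ?_)
      rw [hv, norm_mul]
      refine mul_le_of_le_one_right (norm_nonneg _) ?_
      rw [Complex.norm_real, Real.norm_of_nonneg (by positivity), Real.exp_le_one_iff]
      have := sq_nonneg ‖y - x‖
      linarith
    have hFT : (fun ξ => stft d u (x, ξ)) = FT d v := by
      funext ξ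
      rw [stft, FT]
      congr 1 with y
      simp only [pkbar, hv]
      ring
    have hFTI : Integrable (FT d v) := by
      rw [← hFT]
      refine ((integrable_one_add_norm_sq_rpow d).const_mul ‖a x‖).mono'
        ((stronglyMeasurable_stft d u.continuous.measurable).comp_measurable
          measurable_prodMk_left).aestronglyMeasurable (.of_forall fun ξ => hale (x, ξ))
    have h := integral_exp_inner_mul_FT d hvc hvI hFTI y
    calc _ = ∫ ξ, ((Real.exp (-‖y - x‖ ^ 2 / 2) : ℝ) : ℂ) *
          (Complex.exp (Complex.I * (⟪y, ξ⟫ : ℂ)) * FT d v ξ) := by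
          congr 1 with ξ
          rw [← hFT, pkbar, RCLike.star_def, map_mul, Complex.conj_ofReal, ← Complex.exp_conj,
            map_mul, map_neg, Complex.conj_I, Complex.conj_ofReal, neg_neg]
          ring
      _ = _ := by
          rw [integral_const_mul, h, hv]
          have : Real.exp (-1 * ‖x - y‖ ^ 2) =
              Real.exp (-‖y - x‖ ^ 2 / 2) * Real.exp (-‖y - x‖ ^ 2 / 2) := by
            rw [← Real.exp_add, norm_sub_rev]
            ring_nf
          rw [this, Complex.ofReal_mul]
          ring
  rw [Measure.volume_eq_prod] at hI ⊢
  rw [integral_prod _ hI]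
  simp_rw [hin]
  rw [integral_const_mul, integral_complex_ofReal,
    integral_sub_right_eq_self (fun x : E d => Real.exp (-1 * ‖x‖ ^ 2)) y,
    GaussianFourier.integral_rexp_neg_mul_sq_norm one_pos, finrank_euclideanSpace_fin, div_one,
    Complex.ofReal_mul]
  ring

lemma lintegral_enorm_rpow_le_stft (d : ℕ) {p : ℝ} (hp1 : 1 < p) (hp2 : p ≤ 2) :
    ∃ C : ℝ≥0∞, C ≠ ∞ ∧ ∀ u : SchwartzMap (E d) ℂ,
      ∫⁻ y, ‖u y‖ₑ ^ p ≤ C * ∫⁻ z, ‖stft d u z‖ₑ ^ p := by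
  obtain ⟨M, hM0, hM⟩ := exists_norm_besselKernel_le d le_rfl
  obtain ⟨B, hB, hKB⟩ := exists_lintegral_besselKernel_le d le_rfl
  obtain ⟨A, hA, hKA⟩ := exists_lintegral_besselKernel_gram_le d le_rfl
  set K : P d → E d → ℂ := fun z y => star (besselKernel d 0 z y) with hK
  have hKm : StronglyMeasurable (Function.uncurry K) :=
    continuous_star.comp_stronglyMeasurable (stronglyMeasurable_besselKernel d 0)
  have hMb : ∀ z y, ‖K z y‖ ≤ M := by
    intro z y
    rw [hK, norm_star]
    refine (hM z y).trans (mul_le_of_le_one_right hM0 ?_)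
    rw [Real.exp_le_one_iff]
    have := norm_nonneg (y - z.1)
    linarith
  have hKB' : ∀ z, ∫⁻ y, ‖K z y‖ₑ ≤ B := by
    simpa only [hK, Complex.enorm_star] using hKB
  have hKA' : ∀ z, ∫⁻ z', ‖∫ y, K z y * star (K z' y)‖ₑ ≤ A := by
    intro z
    refine le_of_eq_of_le (lintegral_congr fun z' => ?_) (hKA z)
    rw [enorm_gram_comm (besselKernel d 0)]
    simp only [hK, star_star, mul_comm]
  set T : (P d → ℂ) → E d → ℂ := fun W y => ∫ z, K z y * W z with hT
  have hTm : ∀ W : P d → ℂ, Integrable W → Measurable W → AEStronglyMeasurable (T W) := by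
    intro W _ hWm
    refine StronglyMeasurable.aestronglyMeasurable (StronglyMeasurable.integral_prod_left'
      (f := fun q : P d × E d => K q.1 q.2 * W q.1) ?_)
    exact hKm.mul (hWm.comp measurable_fst).stronglyMeasurable
  have hKW : ∀ W : P d → ℂ, Integrable W → ∀ y, Integrable fun z => K z y * W z :=
    fun W hW y => hW.bdd_mul (hKm.comp_measurable measurable_prodMk_right).aestronglyMeasurable
      (.of_forall fun z => hMb z y)
  have h1 : ∀ W : P d → ℂ, Integrable W → Measurable W → ∀ t : ℝ, 0 < t →
      volume {y | t < ‖T W y‖} ≤ B * (∫⁻ z, ‖W z‖ₑ) * ENNReal.ofReal (1 / t) := by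
    intro W hW hWm t ht
    have hsub : {y | t < ‖T W y‖} ⊆ {y | ENNReal.ofReal t ≤ ‖T W y‖ₑ} := by
      intro y hy
      have hy : t < ‖T W y‖ := hy
      change ENNReal.ofReal t ≤ ‖T W y‖ₑ
      rw [← ofReal_norm]
      exact ENNReal.ofReal_le_ofReal hy.le
    refine (measure_mono hsub).trans ((meas_ge_le_lintegral_div (hTm W hW hWm).enorm
      (by simpa using ht) ENNReal.ofReal_ne_top).trans ?_)
    rw [div_eq_mul_inv, ← ENNReal.ofReal_inv_of_pos ht, one_div]
    gcongr
    exact lintegral_enorm_synthesis_le hKm hB hKB' hW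
  have h2 : ∀ W : P d → ℂ, Integrable W → Measurable W →
      ∫⁻ y, ‖T W y‖ₑ ^ (2 : ℝ) ≤ (2 * A) * ∫⁻ z, ‖W z‖ₑ ^ (2 : ℝ) := fun W hW hWm =>
    lintegral_enorm_sq_synthesis_le hKm hMb hB hKB' hKA' hW hWm
  have hTu : ∀ (u : SchwartzMap (E d) ℂ) (y : E d), ‖u y‖ₑ ≤ ‖T (stft d u) y‖ₑ := by
    intro u y
    have e : T (stft d u) y = ((2 * π) ^ ((d : ℝ) / 2) * ((2 * π) ^ d * π ^ ((d : ℝ) / 2)) : ℝ) *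
        u y := by
      rw [Complex.ofReal_mul, mul_assoc, ← integral_star_pkbar_mul_stft, ← integral_const_mul]
      refine integral_congr_ae (.of_forall fun z => ?_)
      simp only [hK, RCLike.star_def]
      rw [besselKernel_zero, map_mul, Complex.conj_ofReal]
      ring
    rw [e]
    refine enorm_le_iff_norm_le.2 ?_
    rw [norm_mul, Complex.norm_real, Real.norm_of_nonneg (by positivity)]
    refine le_mul_of_one_le_left (norm_nonneg _) ?_
    have hπ := Real.pi_gt_three
    exact one_le_mul_of_one_le_of_one_le (Real.one_le_rpow (by linarith) (by positivity))
      (one_le_mul_of_one_le_of_one_le (one_le_pow₀ (by linarith))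
        (Real.one_le_rpow (by linarith) (by positivity)))
  have hVm : ∀ u : SchwartzMap (E d) ℂ, Measurable (stft d u) := fun u =>
    (stronglyMeasurable_stft d u.continuous.measurable).measurable
  have hmono : ∀ u : SchwartzMap (E d) ℂ, ∫⁻ y, ‖u y‖ₑ ^ p ≤ ∫⁻ y, ‖T (stft d u) y‖ₑ ^ p :=
    fun u => lintegral_mono fun y => ENNReal.rpow_le_rpow (hTu u y) (by linarith)
  rcases hp2.eq_or_lt with rfl | hp2
  · exact ⟨2 * A, by finiteness, fun u =>
      (hmono u).trans (h2 _ (integrable_stft d u) (hVm u))⟩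
  · exact ⟨_, by finiteness, fun u => (hmono u).trans
      (lintegral_rpow_le_of_weak_one_strong_two hp1 hp2 T B (2 * A) hTm
        (fun W W' hW hW' y => by
          simp only [hT, Pi.add_apply, mul_add]
          rw [integral_add (hKW W hW y) (hKW W' hW' y)])
        h1 h2 (integrable_stft d u) (hVm u))⟩

lemma exists_schwartz_eq_dil (d : ℕ) {h : ℝ} (hh : 0 < h) (f : SchwartzMap (E d) ℂ) :
    ∃ u : SchwartzMap (E d) ℂ, ⇑u = dil d h f := by
  let e : E d ≃L[ℝ] E d := ContinuousLinearEquiv.smulLeft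
    (Units.mk0 (h ^ ((1 : ℝ) / 2)) (Real.rpow_pos_of_pos hh _).ne')
  refine ⟨((h ^ ((d : ℝ) / 4) : ℝ) : ℂ) • SchwartzMap.compCLMOfContinuousLinearEquiv ℂ e f, ?_⟩
  ext x
  rfl

lemma integral_norm_dil_rpow (d : ℕ) {h : ℝ} (hh : 0 < h) (g : E d → ℂ) (p : ℝ) :
    ∫ x, ‖dil d h g x‖ ^ p = h ^ ((d : ℝ) / 4 * p - d / 2) * ∫ x, ‖g x‖ ^ p := by
  have hs : 0 < h ^ ((1 : ℝ) / 2) := Real.rpow_pos_of_pos hh _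
  have e : ∀ x, ‖dil d h g x‖ ^ p =
      h ^ ((d : ℝ) / 4 * p) * ‖g ((h ^ ((1 : ℝ) / 2)) • x)‖ ^ p := fun x => by
    rw [dil, norm_mul, Complex.norm_real, Real.norm_of_nonneg (by positivity),
      Real.mul_rpow (by positivity) (norm_nonneg _), ← Real.rpow_mul hh.le]
  simp_rw [e]
  rw [integral_const_mul, Measure.integral_comp_smul volume (fun x => ‖g x‖ ^ p),
    abs_of_pos (by positivity), smul_eq_mul, ← mul_assoc, finrank_euclideanSpace, Fintype.card_fin,
    ← Real.rpow_natCast, ← Real.rpow_mul hh.le, ← Real.rpow_neg hh.le, ← Real.rpow_add hh]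
  ring_nf

lemma integral_norm_dil_rpow_rpow (d : ℕ) {h : ℝ} (hh : 0 < h) (g : E d → ℂ) {p : ℝ}
    (hp : 0 < p) :
    (∫ x, ‖dil d h g x‖ ^ p) ^ (1 / p) =
      h ^ ((d : ℝ) * (1 / 2 - 1 / p) / 2) * (∫ x, ‖g x‖ ^ p) ^ (1 / p) := by
  rw [integral_norm_dil_rpow d hh, Real.mul_rpow (by positivity)
    (integral_nonneg fun _ => by positivity), ← Real.rpow_mul hh.le]
  congr 2
  field_simp
  ring

lemma FT_dil (d : ℕ) {h : ℝ} (hh : 0 < h) (f : E d → ℂ) (ξ : E d) :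
    FT d (dil d h f) (h ^ ((1 : ℝ) / 2) • ξ) =
      (h ^ ((d : ℝ) / 4 - d / 2) : ℝ) * FT d f ξ := by
  have hs : 0 < h ^ ((1 : ℝ) / 2) := Real.rpow_pos_of_pos hh _
  have e : ∀ x, Complex.exp (-Complex.I * (⟪x, h ^ ((1 : ℝ) / 2) • ξ⟫ : ℂ)) * dil d h f x =
      (h ^ ((d : ℝ) / 4) : ℝ) * (fun y => Complex.exp (-Complex.I * (⟪y, ξ⟫ : ℂ)) * f y)
        ((h ^ ((1 : ℝ) / 2)) • x) := fun x => by
    simp only [dil, real_inner_smul_left, real_inner_smul_right]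
    ring
  rw [FT, FT]
  simp_rw [e]
  rw [integral_const_mul, Measure.integral_comp_smul volume
    (fun y => Complex.exp (-Complex.I * (⟪y, ξ⟫ : ℂ)) * f y),
    abs_of_pos (by positivity), finrank_euclideanSpace, Fintype.card_fin,
    ← Real.rpow_natCast, ← Real.rpow_mul hh.le, ← Real.rpow_neg hh.le, Complex.real_smul,
    ← mul_assoc, ← Complex.ofReal_mul, ← Real.rpow_add hh]
  ring_nf

lemma besselh_dil (d : ℕ) {h : ℝ} (hh : 0 < h) (k : ℝ) (f : E d → ℂ) :
    besselh d 1 k (dil d h f) = dil d h (besselh d h k f) := by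
  ext x
  have hs : 0 < h ^ ((1 : ℝ) / 2) := Real.rpow_pos_of_pos hh _
  have hs2 : (h ^ ((1 : ℝ) / 2)) ^ 2 = h := by
    rw [← Real.rpow_natCast, ← Real.rpow_mul hh.le]
    norm_num
  have hc : ((h ^ ((d : ℝ) / 4 - d / 2) : ℝ) : ℂ) * ((h ^ ((d : ℝ) / 2) : ℝ) : ℂ) =
      (h ^ ((d : ℝ) / 4) : ℝ) := by
    rw [← Complex.ofReal_mul, ← Real.rpow_add hh, sub_add_cancel]
  have hd : |((h ^ ((1 : ℝ) / 2)) ^ d)⁻¹| = (h ^ ((d : ℝ) / 2))⁻¹ := by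
    rw [abs_of_pos (by positivity), ← Real.rpow_natCast, ← Real.rpow_mul hh.le]
    ring_nf
  set G : E d → ℂ := fun ξ => Complex.exp (Complex.I * (⟪x, ξ⟫ : ℂ)) *
      (((1 + 1 * ‖ξ‖ ^ 2) ^ (k / 2) : ℝ) : ℂ) * FT d (dil d h f) ξ with hG
  have key := Measure.integral_comp_smul volume G (h ^ ((1 : ℝ) / 2))
  rw [finrank_euclideanSpace, Fintype.card_fin, hd, eq_inv_smul_iff₀ (by positivity),
    Complex.real_smul] at key
  have e : ∀ ξ, G ((h ^ ((1 : ℝ) / 2)) • ξ) = (h ^ ((d : ℝ) / 4 - d / 2) : ℝ) *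
      (Complex.exp (Complex.I * (⟪(h ^ ((1 : ℝ) / 2)) • x, ξ⟫ : ℂ)) *
      (((1 + h * ‖ξ‖ ^ 2) ^ (k / 2) : ℝ) : ℂ) * FT d f ξ) := fun ξ => by
    simp only [hG]
    rw [FT_dil d hh, norm_smul, Real.norm_of_nonneg hs.le, mul_pow, hs2, one_mul,
      real_inner_smul_left, real_inner_smul_right]
    ring
  simp_rw [e] at key
  rw [integral_const_mul] at key
  rw [besselh, dil, besselh, ← hc, ← key]
  ring

/-- An `L^p` bound between lower Lebesgue integrals, restated for Bochner integrals. -/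
lemma integral_norm_rpow_rpow_le {α β : Type*} [MeasurableSpace α] [MeasurableSpace β]
    {μ : Measure α} {ν : Measure β} {f : α → ℂ} {g : β → ℂ} {p : ℝ} (hp : 0 < p) {C : ℝ≥0∞}
    (hC : C ≠ ∞) (hf : Integrable (fun x => ‖f x‖ ^ p) μ) (hg : Integrable (fun x => ‖g x‖ ^ p) ν)
    (h : ∫⁻ x, ‖f x‖ₑ ^ p ∂μ ≤ C * ∫⁻ x, ‖g x‖ₑ ^ p ∂ν) :
    (∫ x, ‖f x‖ ^ p ∂μ) ^ (1 / p) ≤ C.toReal ^ (1 / p) * (∫ x, ‖g x‖ ^ p ∂ν) ^ (1 / p) := by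
  have hn : ∀ z : ℂ, ENNReal.ofReal (‖z‖ ^ p) = ‖z‖ₑ ^ p := fun z => by
    rw [← ofReal_norm, ENNReal.ofReal_rpow_of_nonneg (norm_nonneg _) hp.le]
  have hg0 : 0 ≤ ∫ x, ‖g x‖ ^ p ∂ν := integral_nonneg fun _ => by positivity
  rw [← Real.mul_rpow ENNReal.toReal_nonneg hg0]
  refine Real.rpow_le_rpow (integral_nonneg fun _ => by positivity) ?_ (by positivity)
  rw [← ENNReal.ofReal_le_ofReal_iff (by positivity), ENNReal.ofReal_mul ENNReal.toReal_nonneg,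
    ENNReal.ofReal_toReal hC,
    ofReal_integral_eq_lintegral_ofReal hf (.of_forall fun _ => by positivity),
    ofReal_integral_eq_lintegral_ofReal hg (.of_forall fun _ => by positivity)]
  simpa only [hn] using h

lemma SchwartzMap.integrable_norm_rpow {d : ℕ} (u : SchwartzMap (E d) ℂ) {p : ℝ} (hp : 0 < p) :
    Integrable fun y => ‖u y‖ ^ p := by
  have := (u.memLp (ENNReal.ofReal p)).integrable_norm_rpow (by simpa using hp) (by simp)
  rwa [ENNReal.toReal_ofReal hp.le] at this

/-- the semiclassical embeddings `L^p_k (scaled) ↪ M^p_ℏ ↪ L^p` for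
`1 < p ≤ 2`, `k = 2d(1/p - 1/2)`, with constants uniform in `0 < ℏ ≤ 1`:
`‖f‖_{L^p} ≤ C·ℏ^{d(1/p-1/2)/2}·‖V_g(D_{ℏ^{-1/2}}f)‖_{L^p(ℝ^{2d})}` and
`‖V_g(D_{ℏ^{-1/2}}f)‖_{L^p(ℝ^{2d})} ≤ C·ℏ^{d(1/2-1/p)/2}·‖(1-ℏΔ)^{k/2}f‖_{L^p}`. -/
theorem stmt9 (d : ℕ) (hd : 1 ≤ d) (p : ℝ) (hp1 : 1 < p) (hp2 : p ≤ 2)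
    (k : ℝ) (hk : k = 2 * d * (1 / p - 1 / 2)) :
    ∃ C > (0 : ℝ), ∀ h : ℝ, 0 < h → h ≤ 1 → ∀ f : SchwartzMap (E d) ℂ,
      (∫ x : E d, ‖f x‖ ^ p) ^ (1 / p) ≤
          C * h ^ ((d : ℝ) * (1 / p - 1 / 2) / 2) *
            (∫ z : P d, ‖stft d (dil d h (⇑f)) z‖ ^ p) ^ (1 / p) ∧
      (∫ z : P d, ‖stft d (dil d h (⇑f)) z‖ ^ p) ^ (1 / p) ≤
          C * h ^ ((d : ℝ) * (1 / 2 - 1 / p) / 2) *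
            (∫ x : E d, ‖besselh d h k (⇑f) x‖ ^ p) ^ (1 / p) := by
  have hp0 : 0 < p := by linarith
  obtain ⟨A, hA, hA'⟩ := lintegral_enorm_rpow_le_stft d hp1 hp2
  obtain ⟨B, hB, hB'⟩ : ∃ B : ℝ≥0∞, B ≠ ∞ ∧ ∀ f : SchwartzMap (E d) ℂ,
      ∫⁻ z, ‖stft d f z‖ₑ ^ p ≤ B * ∫⁻ y, ‖besselh d 1 k f y‖ₑ ^ p := by
    rcases hp2.eq_or_lt with rfl | hp2
    · obtain rfl : k = 0 := by simp [hk]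
      exact lintegral_enorm_stft_rpow_two_le d
    · exact lintegral_enorm_stft_rpow_le hd hp1 hp2 hk
  refine ⟨A.toReal ^ (1 / p) + B.toReal ^ (1 / p) + 1, by positivity, fun h hh _ f => ?_⟩
  obtain ⟨u, hu⟩ := exists_schwartz_eq_dil d hh f
  obtain ⟨F, hF, -⟩ := exists_schwartz_eq_besselh d k u
  have hS := integrable_norm_stft_rpow d u hp1
  have h1 := integral_norm_rpow_rpow_le hp0 hA (u.integrable_norm_rpow hp0) hS (hA' u)
  have h2 := integral_norm_rpow_rpow_le hp0 hB hS (hF ▸ F.integrable_norm_rpow hp0) (hB' u)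
  rw [hu] at h1 h2
  rw [integral_norm_dil_rpow_rpow d hh _ hp0] at h1
  rw [besselh_dil d hh, integral_norm_dil_rpow_rpow d hh _ hp0] at h2
  have hI : 0 ≤ (∫ z : P d, ‖stft d (dil d h (⇑f)) z‖ ^ p) ^ (1 / p) := by positivity
  have hJ : 0 ≤ (∫ x : E d, ‖besselh d h k (⇑f) x‖ ^ p) ^ (1 / p) := by positivity
  have hAn : 0 ≤ A.toReal ^ (1 / p) := by positivity
  have hBn : 0 ≤ B.toReal ^ (1 / p) := by positivity
  constructor
  · have e : h ^ ((d : ℝ) * (1 / p - 1 / 2) / 2) = (h ^ ((d : ℝ) * (1 / 2 - 1 / p) / 2))⁻¹ := by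
      rw [← Real.rpow_neg hh.le]
      ring_nf
    rw [e, mul_right_comm, ← div_eq_mul_inv, le_div_iff₀ (by positivity), mul_comm]
    refine h1.trans ?_
    gcongr
    linarith
  · refine h2.trans ?_
    rw [← mul_assoc]
    gcongr
    linarith
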